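/- arXiv:2507.06716 — 2 statements merged into one kernel-verified Lean document; each statement's English description precedes it below -/
import Mathlib

section
/- Let σ ∈ (0,1] and let α satisfy σ < α < min{3/2, 1+σ}. Then the weight W_{α,σ} is a critical Hardy-weight for (−Δ_ℕ)^σ if and only if α ≤ (3+2σ)/4; that is: Q^σ(f) ≥ Σ_{n≥1} W_{α,σ}(n) f(n)² holds for every finitely supported f : ℕ → ℝ and for every nonzero W̃ : ℕ → [0,∞) there exists a finitely supported f with Q^σ(f) < Σ_{n≥1}(W_{α,σ}(n)+W̃(n)) f(n)², precisely when α ≤ (3+2σ)/4. -/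
open Real Filter

/-- Generalized binomial coefficient via the Gamma function. -/
noncomputable def rbinom (a b : ℝ) : ℝ :=
  Real.Gamma (a + 1) / (Real.Gamma (b + 1) * Real.Gamma (a - b + 1))

/-- Kernel of the fractional Laplacian `(-Δ_ℕ)^σ` on the discrete half-line. -/
noncomputable def Kker (σ : ℝ) (m n : ℕ) : ℝ :=
  (-1 : ℝ) ^ (m + n) *
    (rbinom (2 * σ) (σ + m - n) - rbinom (2 * σ) (σ + m + n))

/-- Quadratic form of `(-Δ_ℕ)^σ` (used for finitely supported `f` with `f 0 = 0`). -/
noncomputable def Qform (σ : ℝ) (f : ℕ → ℝ) : ℝ :=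
  ∑' m : ℕ, ∑' n : ℕ, Kker σ m n * f m * f n

/-- The Hardy-weight `W_{α,σ}`. -/
noncomputable def Wweight (σ α : ℝ) (n : ℕ) : ℝ :=
  4 ^ σ * (Real.Gamma (3/2 - α + σ) * Real.Gamma α /
            (Real.Gamma (α - σ) * Real.Gamma (3/2 - α))) *
    (Real.Gamma (n + α - σ - 1) * Real.Gamma (n - α + 2) /
      (Real.Gamma (n - α + σ + 2) * Real.Gamma (n + α - 1)))

/-- The Riesz potential `I_α`. -/
noncomputable def Riesz (α : ℝ) (n : ℕ) : ℝ :=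
  (4 * n / (4 ^ α * Real.sqrt 2)) * Real.Gamma (3/2 - α) *
    Real.Gamma (n + α - 1) / (Real.Gamma α * Real.Gamma (n - α + 2))

section Aux

open MeasureTheory intervalIntegral Topology


noncomputable def ww (t : ℝ) : ℝ := 2 - 2 * cos t

lemma ww_nonneg (t : ℝ) : 0 ≤ ww t := by
  unfold ww; linarith [cos_le_one t]

lemma ww_eq (t : ℝ) : ww t = 4 * sin (t/2) ^ 2 := by
  unfold ww
  have h := cos_two_mul (t/2)
  have h2 := sin_sq_add_cos_sq (t/2)
  rw [mul_div_cancel₀ t (two_ne_zero)] at h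
  linarith

lemma ww_cont : Continuous ww := by unfold ww; fun_prop

lemma ww_lower {t : ℝ} (h0 : 0 ≤ t) (h1 : t ≤ π) : (2 / π * t) ^ 2 ≤ ww t := by
  rw [ww_eq]
  have := Real.mul_le_sin (x := t/2) (by linarith) (by linarith)
  have hp := pi_pos
  have h3 : 0 ≤ 2 / π * (t/2) := by positivity
  nlinarith

lemma ww_pos {t : ℝ} (h0 : 0 < t) (h1 : t ≤ π) : 0 < ww t := by
  have := ww_lower h0.le h1
  have hp := pi_pos
  have : 0 < (2 / π * t) ^ 2 := by positivity
  linarith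

lemma sin_sq_le_ww (t : ℝ) : sin t ^ 2 ≤ ww t := by
  have := sin_sq_add_cos_sq t
  unfold ww
  nlinarith [sq_nonneg (1 - cos t)]

lemma abs_sin_nat_le (n : ℕ) (t : ℝ) : |sin (n * t)| ≤ n * |sin t| := by
  induction n with
  | zero => simp
  | succ k ih =>
    push_cast
    rw [add_mul, one_mul, sin_add]
    calc |sin (k * t) * cos t + cos (k * t) * sin t|
        ≤ |sin (k * t) * cos t| + |cos (k * t) * sin t| := abs_add_le _ _
      _ ≤ |sin (k * t)| * 1 + 1 * |sin t| := by
          rw [abs_mul, abs_mul]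
          gcongr
          · exact abs_cos_le_one _
          · exact abs_cos_le_one _
      _ ≤ _ := by linarith

lemma ww_rpow_int {r : ℝ} (hr : -(1/2) < r) :
    IntervalIntegrable (fun t => ww t ^ r) volume 0 π := by
  rcases le_or_gt 0 r with h | h
  · exact (ww_cont.rpow_const (fun _ => Or.inr h)).intervalIntegrable _ _
  · have h1 : IntervalIntegrable (fun t : ℝ => ((2/π)^2)^r * t ^ (2 * r)) volume 0 π :=
      (intervalIntegrable_rpow' (by linarith)).const_mul _
    refine h1.mono_fun ?_ ?_
    · exact (ww_cont.measurable.pow_const r).aestronglyMeasurable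
    · refine (ae_restrict_mem measurableSet_uIoc).mono ?_
      intro t ht
      rw [Set.uIoc_of_le pi_pos.le] at ht
      have hp := pi_pos
      have ht0 := ht.1
      have hl := ww_lower ht.1.le ht.2
      dsimp only
      rw [Real.norm_of_nonneg (rpow_nonneg (ww_nonneg _) _), Real.norm_of_nonneg (by positivity)]
      have : ((2/π)^2)^r * t ^ (2 * r) = ((2 / π * t) ^ 2) ^ r := by
        rw [mul_pow, mul_rpow (by positivity) (by positivity)]
        congr 1
        rw [← rpow_natCast t 2, ← rpow_mul ht0.le]; norm_num
      rw [this]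
      exact rpow_le_rpow_of_nonpos (by positivity) hl h.le

/-- the basic sine integral -/
noncomputable def JJ (s : ℝ) (n : ℕ) : ℝ := ∫ t in (0:ℝ)..π, ww t ^ s * (sin t * sin (n * t))

lemma JJ_bound (s : ℝ) (n : ℕ) {t : ℝ} (h0 : 0 < t) (h1 : t ≤ π) :
    |ww t ^ s * (sin t * sin (n * t))| ≤ n * ww t ^ (s + 1) := by
  have hw := ww_pos h0 h1
  rw [abs_mul, abs_of_nonneg (rpow_nonneg hw.le _), abs_mul, rpow_add hw, rpow_one]
  have h2 := abs_sin_nat_le n t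
  have h3 := sin_sq_le_ww t
  have h4 : |sin t| * |sin (n * t)| ≤ n * ww t := by
    calc |sin t| * |sin (n * t)| ≤ |sin t| * (n * |sin t|) := by gcongr
      _ = n * sin t ^ 2 := by rw [← sq_abs]; ring
      _ ≤ _ := by gcongr
  calc ww t ^ s * (|sin t| * |sin (n * t)|) ≤ ww t ^ s * (n * ww t) := by
        gcongr
    _ = _ := by ring

lemma JJ_int {s : ℝ} (hs : -(3/2) < s) (n : ℕ) :
    IntervalIntegrable (fun t => ww t ^ s * (sin t * sin (n * t))) volume 0 π := by
  have h1 := (ww_rpow_int (r := s + 1) (by linarith)).const_mul (n : ℝ)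
  refine h1.mono_fun ?_ ?_
  · refine Measurable.aestronglyMeasurable ?_
    have := ww_cont.measurable
    fun_prop
  · refine (ae_restrict_mem measurableSet_uIoc).mono ?_
    intro t ht
    rw [Set.uIoc_of_le pi_pos.le] at ht
    have := JJ_bound s n ht.1 ht.2
    dsimp only
    rw [Real.norm_eq_abs]
    exact this.trans (le_abs_self _)

lemma hasDerivAt_ww_rpow (s : ℝ) {t : ℝ} (hw : 0 < ww t) :
    HasDerivAt (fun t => ww t ^ s) (s * ww t ^ (s - 1) * (2 * sin t)) t := by
  have h : HasDerivAt ww (2 * sin t) t := by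
    unfold ww
    have := ((hasDerivAt_cos t).const_mul 2).const_sub 2
    exact this.congr_deriv (by ring)
  have := h.rpow_const (p := s) (Or.inl hw.ne')
  exact this.congr_deriv (by ring)

lemma JJ_rec {s : ℝ} (hs : -(3/2) < s) (n : ℕ) :
    n * (n + 2 + s) * JJ s (n + 1) = (n + 1) * (n - 1 - s) * JJ s n := by
  have hderiv : ∀ t ∈ Set.Ioo 0 π, HasDerivAt
      (fun t => ww t ^ (s + 1) * (n * sin ((n + 1 : ℕ) * t) + (n + 1) * sin (n * t)))
      (2 * (n * (n + 2 + s) * (ww t ^ s * (sin t * sin ((n + 1 : ℕ) * t)))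
        - (n + 1) * (n - 1 - s) * (ww t ^ s * (sin t * sin (n * t))))) t := by
    intro t ht
    have hw := ww_pos ht.1 ht.2.le
    have h1 := hasDerivAt_ww_rpow (s + 1) hw
    have h2 : ∀ k : ℕ, HasDerivAt (fun t : ℝ => sin (k * t)) (cos (k * t) * k) t := by
      intro k
      have := ((hasDerivAt_id t).const_mul (k : ℝ)).sin
      simpa using this
    have h3 := h1.mul (((h2 (n + 1)).const_mul (n : ℝ)).add ((h2 n).const_mul ((n : ℝ) + 1)))
    refine h3.congr_deriv ?_
    simp only [Pi.add_apply]
    rw [add_sub_cancel_right, rpow_add hw, rpow_one]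
    have e1 : sin ((n + 1 : ℕ) * t) = sin (n * t) * cos t + cos (n * t) * sin t := by
      push_cast; rw [add_mul, one_mul, sin_add]
    have e2 : cos ((n + 1 : ℕ) * t) = cos (n * t) * cos t - sin (n * t) * sin t := by
      push_cast; rw [add_mul, one_mul, cos_add]
    rw [e1, e2]
    have e3 : sin t ^ 2 = 1 - cos t ^ 2 := by linarith [sin_sq_add_cos_sq t]
    push_cast
    unfold ww
    linear_combination (2 - 2 * cos t) ^ s * (n * ((n + 1) * 2 * cos (n * t)) * (-1)) * e3
  have hlim0 : Tendsto (fun t => ww t ^ (s + 1) * (n * sin ((n + 1 : ℕ) * t) + (n + 1) * sin (n * t)))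
      (𝓝[>] 0) (𝓝 0) := by
    have hc : Tendsto (fun t => 2 * (n * (n + 1)) * ww t ^ (s + 3/2)) (𝓝[>] 0) (𝓝 0) := by
      have : Continuous (fun t => 2 * (n * (n + 1)) * ww t ^ (s + 3/2)) :=
        continuous_const.mul (ww_cont.rpow_const (fun _ => Or.inr (by linarith)))
      have h := this.tendsto 0
      have h0 : ww 0 = 0 := by simp [ww]
      simp only [h0] at h
      rw [zero_rpow (by linarith), mul_zero] at h
      exact h.mono_left nhdsWithin_le_nhds
    refine squeeze_zero_norm' ?_ hc
    filter_upwards [Ioo_mem_nhdsGT pi_pos] with t ht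
    have hw := ww_pos ht.1 ht.2.le
    have hs : |sin t| ≤ ww t ^ (1/2 : ℝ) := by
      rw [← Real.sqrt_eq_rpow]
      exact abs_le_sqrt (sin_sq_le_ww t)
    rw [Real.norm_eq_abs, abs_mul, abs_of_nonneg (rpow_nonneg hw.le _)]
    have h1 := abs_sin_nat_le n t
    have h2 := abs_sin_nat_le (n + 1) t
    have : |n * sin ((n + 1 : ℕ) * t) + (n + 1) * sin (n * t)| ≤ 2 * (n * (n + 1)) * ww t ^ (1/2 : ℝ) := by
      calc _ ≤ |n * sin ((n + 1 : ℕ) * t)| + |(n + 1) * sin (n * t)| := abs_add_le _ _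
        _ = n * |sin ((n + 1 : ℕ) * t)| + (n + 1) * |sin (n * t)| := by
            rw [abs_mul, abs_mul, Nat.abs_cast, abs_of_nonneg (by positivity : (0:ℝ) ≤ n + 1)]
        _ ≤ n * ((n + 1 : ℕ) * |sin t|) + (n + 1) * (n * |sin t|) := by gcongr
        _ = 2 * (n * (n + 1)) * |sin t| := by push_cast; ring
        _ ≤ _ := by gcongr
    calc _ ≤ ww t ^ (s + 1) * (2 * (n * (n + 1)) * ww t ^ (1/2 : ℝ)) := by gcongr
      _ = 2 * (n * (n + 1)) * (ww t ^ (s + 1) * ww t ^ (1/2 : ℝ)) := by ring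
      _ = _ := by rw [← rpow_add hw]; norm_num [add_assoc]
  have hlimp : Tendsto (fun t => ww t ^ (s + 1) * (n * sin ((n + 1 : ℕ) * t) + (n + 1) * sin (n * t)))
      (𝓝[<] π) (𝓝 0) := by
    have hw := ww_pos pi_pos le_rfl
    have hcont : ContinuousAt (fun t => ww t ^ (s + 1) * (n * sin ((n + 1 : ℕ) * t) + (n + 1) * sin (n * t))) π := by
      refine ContinuousAt.mul (ww_cont.continuousAt.rpow_const (Or.inl hw.ne')) ?_
      fun_prop
    have := hcont.tendsto
    simp only [sin_nat_mul_pi, mul_zero, add_zero] at this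
    exact this.mono_left nhdsWithin_le_nhds
  have hi := JJ_int hs n
  have hi1 := JJ_int hs (n + 1)
  have := integral_eq_sub_of_hasDerivAt_of_tendsto pi_pos hderiv
    (((hi1.const_mul _).sub (hi.const_mul _)).const_mul _) hlim0 hlimp
  rw [intervalIntegral.integral_const_mul, intervalIntegral.integral_sub (hi1.const_mul _) (hi.const_mul _),
    intervalIntegral.integral_const_mul, intervalIntegral.integral_const_mul] at this
  unfold JJ
  linarith


lemma real_beta {u v : ℝ} (hu : 0 < u) (hv : 0 < v) :
    ∫ x in (0:ℝ)..1, x ^ (u - 1) * (1 - x) ^ (v - 1) = Gamma u * Gamma v / Gamma (u + v) := by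
  have h := ProbabilityTheory.beta_eq_betaIntegralReal u v hu hv
  unfold ProbabilityTheory.beta at h
  rw [h, Complex.betaIntegral]
  have : ∫ x in (0:ℝ)..1, (x : ℂ) ^ ((u : ℂ) - 1) * (1 - (x : ℂ)) ^ ((v : ℂ) - 1)
      = ∫ x in (0:ℝ)..1, ((x ^ (u - 1) * (1 - x) ^ (v - 1) : ℝ) : ℂ) := by
    refine intervalIntegral.integral_congr_ae ?_
    refine Eventually.of_forall ?_
    intro x hx
    rw [Set.uIoc_of_le zero_le_one] at hx
    rw [Complex.ofReal_mul, Complex.ofReal_cpow hx.1.le, Complex.ofReal_cpow (by linarith [hx.2])]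
    push_cast
    rfl
  rw [this, intervalIntegral.integral_ofReal, Complex.ofReal_re]

lemma real_beta_int {u v : ℝ} (hu : 0 < u) (hv : 1 ≤ v) :
    IntervalIntegrable (fun x : ℝ => x ^ (u - 1) * (1 - x) ^ (v - 1)) volume 0 1 := by
  refine (intervalIntegrable_rpow' (by linarith)).mul_continuousOn ?_
  refine Continuous.continuousOn ?_
  exact (by fun_prop : Continuous fun x : ℝ => 1 - x).rpow_const (fun _ => Or.inr (by linarith))

lemma JJ_one {s : ℝ} (hs : -(3/2) < s) :
    JJ s 1 = 4 ^ (s + 1) * (Gamma (s + 3/2) * Gamma (3/2) / Gamma (s + 3)) := by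
  have hb := real_beta (u := s + 3/2) (v := 3/2) (by linarith) (by norm_num)
  have hbi := real_beta_int (u := s + 3/2) (v := 3/2) (by linarith) (by norm_num)
  have e0 : s + 3/2 + 3/2 = s + 3 := by ring
  rw [e0] at hb
  rw [← hb]
  have key : ∀ t ∈ Set.Ioc 0 π, ww t ^ s * (sin t * sin ((1 : ℕ) * t)) =
      4 ^ (s + 1) * (((fun x : ℝ => x ^ (s + 3/2 - 1) * (1 - x) ^ ((3/2 : ℝ) - 1)) ∘ (fun t => ww t / 4)) t
        * (sin t / 2)) := by
    intro t ht
    have hw := ww_pos ht.1 ht.2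
    have hs0 : 0 ≤ sin t := sin_nonneg_of_nonneg_of_le_pi ht.1.le ht.2
    have hsin : (ww t / 4) ^ (1/2 : ℝ) * (1 - ww t / 4) ^ (1/2 : ℝ) = sin t / 2 := by
      rw [← Real.sqrt_eq_rpow, ← Real.sqrt_eq_rpow, ← Real.sqrt_mul (by positivity)]
      rw [Real.sqrt_eq_iff_mul_self_eq]
      · have := sin_sq_add_cos_sq t
        unfold ww
        nlinarith
      · unfold ww
        nlinarith [cos_le_one t, neg_one_le_cos t]
      · positivity
    simp only [Function.comp]
    have e1 : s + 3/2 - 1 = s + 1/2 := by ring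
    have e2 : (3/2 : ℝ) - 1 = 1/2 := by norm_num
    rw [e1, e2, rpow_add (by positivity : 0 < ww t / 4), mul_assoc ((ww t / 4) ^ s), hsin,
      div_rpow hw.le (by norm_num), rpow_add (by norm_num : (0:ℝ) < 4), rpow_one]
    have : (4:ℝ) ^ s ≠ 0 := by positivity
    push_cast
    field_simp
    norm_num
  have hww0 : ww 0 / 4 = 0 := by simp [ww]
  have hwwp : ww π / 4 = 1 := by simp [ww]; norm_num
  have himg : (fun t => ww t / 4) '' Set.uIcc 0 π ⊆ Set.Icc 0 1 := by
    rintro _ ⟨t, _, rfl⟩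
    refine ⟨by have := ww_nonneg t; positivity, ?_⟩
    have := neg_one_le_cos t
    simp only [ww]; linarith
  have hint := JJ_int hs 1
  have hsub := integral_comp_mul_deriv''' (a := 0) (b := π) (f := fun t => ww t / 4) (f' := fun t => sin t / 2)
    (g := fun x : ℝ => x ^ (s + 3/2 - 1) * (1 - x) ^ ((3/2 : ℝ) - 1))
    (by have := ww_cont; fun_prop)
    (by
      intro t ht
      have h : HasDerivAt (fun t => ww t / 4) (sin t / 2) t := by
        unfold ww
        have := (((hasDerivAt_cos t).const_mul 2).const_sub 2).div_const 4
        exact this.congr_deriv (by ring)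
      exact h.hasDerivWithinAt)
    (by
      rintro x ⟨t, ht, rfl⟩
      rw [min_eq_left pi_pos.le, max_eq_right pi_pos.le] at ht
      have hw := ww_pos ht.1 ht.2.le
      refine ContinuousAt.continuousWithinAt ?_
      refine ContinuousAt.mul (continuousAt_id.rpow_const (Or.inl (by simp; positivity))) ?_
      exact ContinuousAt.rpow_const (by fun_prop) (Or.inr (by norm_num)))
    (by
      rw [intervalIntegrable_iff_integrableOn_Icc_of_le zero_le_one] at hbi
      exact hbi.mono_set himg)
    (by
      rw [Set.uIcc_of_le pi_pos.le, integrableOn_Icc_iff_integrableOn_Ioc]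
      rw [intervalIntegrable_iff_integrableOn_Ioc_of_le pi_pos.le] at hint
      have h2 := hint.const_mul ((4:ℝ)^(s+1))⁻¹
      refine IntegrableOn.congr_fun h2 ?_ measurableSet_Ioc
      intro t ht
      have := key t ht
      simp only at this ⊢
      rw [this, ← mul_assoc, inv_mul_cancel₀ (by positivity), one_mul])
  rw [hww0, hwwp] at hsub
  rw [← hsub, ← intervalIntegral.integral_const_mul]
  unfold JJ
  refine intervalIntegral.integral_congr_ae ?_
  refine Eventually.of_forall ?_
  intro t ht
  rw [Set.uIoc_of_le pi_pos.le] at ht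
  exact key t ht

/-- closed form (multiple of the Riesz potential). -/
noncomputable def HH (a : ℝ) (n : ℕ) : ℝ :=
  4 ^ (1 - a) * Gamma (3/2 - a) * Gamma (3/2) / Gamma a * (n * Gamma (n + a - 1) / Gamma (n + 2 - a))

lemma HH_pos {a : ℝ} (h0 : 0 < a) (h1 : a < 3/2) {n : ℕ} (hn : 1 ≤ n) : 0 < HH a n := by
  have hn' : (1:ℝ) ≤ n := by exact_mod_cast hn
  have := Gamma_pos_of_pos h0
  have := Gamma_pos_of_pos (show 0 < 3/2 - a by linarith)
  have := Gamma_pos_of_pos (show (0:ℝ) < 3/2 by norm_num)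
  have := Gamma_pos_of_pos (show 0 < n + a - 1 by linarith)
  have := Gamma_pos_of_pos (show 0 < n + 2 - a by linarith)
  unfold HH
  positivity

lemma HH_rec {a : ℝ} (h0 : 0 < a) (h1 : a < 3/2) {n : ℕ} (hn : 1 ≤ n) :
    n * (n + 2 - a) * HH a (n + 1) = (n + 1) * (n - 1 + a) * HH a n := by
  have hn' : (1:ℝ) ≤ n := by exact_mod_cast hn
  have g1 := Gamma_add_one (s := n + a - 1) (by linarith)
  have g2 := Gamma_add_one (s := n + 2 - a) (by linarith)
  have := Gamma_pos_of_pos h0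
  have := Gamma_pos_of_pos (show 0 < n + 2 - a by linarith)
  have h3 : (n:ℝ) + 2 - a ≠ 0 := by linarith
  unfold HH
  push_cast
  rw [show (n:ℝ) + 1 + a - 1 = n + a - 1 + 1 by ring, show (n:ℝ) + 1 + 2 - a = n + 2 - a + 1 by ring, g1, g2]
  field_simp
  ring

lemma JJ_eq_HH {a : ℝ} (h0 : 0 < a) (h1 : a < 3/2) (n : ℕ) (hn : 1 ≤ n) : JJ (-a) n = HH a n := by
  induction n, hn using Nat.le_induction with
  | base =>
    rw [JJ_one (by linarith)]
    unfold HH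
    have := Gamma_pos_of_pos h0
    rw [show -a + 1 = 1 - a by ring, show -a + 3/2 = 3/2 - a by ring, show -a + 3 = 3 - a by ring]
    push_cast
    rw [show (1:ℝ) + a - 1 = a by ring, show (1:ℝ) + 2 - a = 3 - a by ring]
    field_simp
  | succ n hn ih =>
    have hn' : (1:ℝ) ≤ n := by exact_mod_cast hn
    have r1 := JJ_rec (s := -a) (by linarith) n
    have r2 := HH_rec h0 h1 hn
    rw [ih] at r1
    have h3 : (n:ℝ) * (n + 2 - a) ≠ 0 := by
      have : (n:ℝ) + 2 - a > 0 := by linarith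
      positivity
    apply mul_left_cancel₀ h3
    linear_combination r1 - r2

lemma Wweight_eq {σ α : ℝ} (hσ0 : 0 < σ) (hα1 : σ < α) (h1 : α < 3/2) {n : ℕ} (hn : 1 ≤ n) :
    Wweight σ α n * HH α n = HH (α - σ) n := by
  have hn' : (1:ℝ) ≤ n := by exact_mod_cast hn
  have := Gamma_pos_of_pos (show 0 < α by linarith)
  have := Gamma_pos_of_pos (show 0 < α - σ by linarith)
  have := Gamma_pos_of_pos (show 0 < 3/2 - α by linarith)
  have := Gamma_pos_of_pos (show 0 < n + α - 1 by linarith)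
  have := Gamma_pos_of_pos (show 0 < n - α + 2 by linarith)
  have := Gamma_pos_of_pos (show 0 < n - α + σ + 2 by linarith)
  unfold Wweight HH
  rw [show 1 - (α - σ) = σ + (1 - α) by ring, rpow_add (by norm_num : (0:ℝ) < 4),
    show (n:ℝ) + 2 - α = n - α + 2 by ring, show (n:ℝ) + 2 - (α - σ) = n - α + σ + 2 by ring,
    show 3/2 - (α - σ) = 3/2 - α + σ by ring, show (n:ℝ) + (α - σ) - 1 = n + α - σ - 1 by ring]
  generalize Gamma (3/2 - α) = x at *
  field_simp


noncomputable def kap (σ : ℝ) (k : ℕ) : ℝ := (1 / π) * ∫ t in (0:ℝ)..π, ww t ^ σ * cos (k * t)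

lemma kap_cont {σ : ℝ} (hσ : 0 < σ) (k : ℕ) : Continuous (fun t => ww t ^ σ * cos (k * t)) := by
  have := ww_cont.rpow_const (p := σ) (fun _ => Or.inr hσ.le)
  fun_prop

lemma kap_int {σ : ℝ} (hσ : 0 < σ) (k : ℕ) (a b : ℝ) :
    IntervalIntegrable (fun t => ww t ^ σ * cos (k * t)) volume a b :=
  (kap_cont hσ k).intervalIntegrable _ _

lemma kap_rec {σ : ℝ} (hσ : 0 < σ) (k : ℕ) :
    (k + 1 + σ) * kap σ (k + 1) = (k - σ) * kap σ k := by
  have hderiv : ∀ t ∈ Set.Ioo 0 π, HasDerivAt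
      (fun t => ww t ^ σ * (sin ((k + 1 : ℕ) * t) - sin (k * t)))
      ((k + 1 + σ) * (ww t ^ σ * cos ((k + 1 : ℕ) * t)) - (k - σ) * (ww t ^ σ * cos (k * t))) t := by
    intro t ht
    have hw := ww_pos ht.1 ht.2.le
    have h1 := hasDerivAt_ww_rpow σ hw
    have h2 : ∀ k : ℕ, HasDerivAt (fun t : ℝ => sin (k * t)) (cos (k * t) * k) t := by
      intro k
      have := ((hasDerivAt_id t).const_mul (k : ℝ)).sin
      simpa using this
    have h3 := h1.mul ((h2 (k + 1)).sub (h2 k))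
    refine h3.congr_deriv ?_
    simp only [Pi.sub_apply]
    have e0 : ww t ^ σ = ww t ^ (σ - 1) * ww t := by
      rw [← rpow_add_one hw.ne']; ring_nf
    rw [e0]
    have e1 : sin ((k + 1 : ℕ) * t) = sin (k * t) * cos t + cos (k * t) * sin t := by
      push_cast; rw [add_mul, one_mul, sin_add]
    have e2 : cos ((k + 1 : ℕ) * t) = cos (k * t) * cos t - sin (k * t) * sin t := by
      push_cast; rw [add_mul, one_mul, cos_add]
    rw [e1, e2]
    have e3 : sin t ^ 2 = 1 - cos t ^ 2 := by linarith [sin_sq_add_cos_sq t]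
    generalize ww t ^ (σ - 1) = x
    push_cast
    unfold ww
    linear_combination x * (2 * σ * cos (k * t)) * e3
  have hc : ContinuousOn (fun t => ww t ^ σ * (sin ((k + 1 : ℕ) * t) - sin (k * t))) (Set.Icc 0 π) := by
    have := ww_cont.rpow_const (p := σ) (fun _ => Or.inr hσ.le)
    fun_prop
  have hi := kap_int hσ k 0 π
  have hi1 := kap_int hσ (k + 1) 0 π
  have := integral_eq_sub_of_hasDerivAt_of_le pi_pos.le hc hderiv ((hi1.const_mul _).sub (hi.const_mul _))
  rw [intervalIntegral.integral_sub (hi1.const_mul _) (hi.const_mul _),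
    intervalIntegral.integral_const_mul, intervalIntegral.integral_const_mul] at this
  simp only [sin_nat_mul_pi, mul_zero, sin_zero, sub_zero] at this
  unfold kap
  linear_combination (1 / π) * this

lemma kap_zero {σ : ℝ} (hσ : 0 < σ) : kap σ 0 = Gamma (2 * σ + 1) / Gamma (σ + 1) ^ 2 := by
  have h1 : JJ σ 1 = π / 2 * (kap σ 0 - kap σ 2) := by
    have : JJ σ 1 = 1 / 2 * ((∫ t in (0:ℝ)..π, ww t ^ σ * cos ((0:ℕ) * t)) -
        ∫ t in (0:ℝ)..π, ww t ^ σ * cos ((2:ℕ) * t)) := by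
      rw [← intervalIntegral.integral_sub (kap_int hσ 0 0 π) (kap_int hσ 2 0 π),
        ← intervalIntegral.integral_const_mul]
      unfold JJ
      congr 1
      ext t
      push_cast
      rw [zero_mul, cos_zero, cos_two_mul, one_mul]
      have e3 : sin t ^ 2 = 1 - cos t ^ 2 := by linarith [sin_sq_add_cos_sq t]
      linear_combination ww t ^ σ * e3
    rw [this]
    unfold kap
    have := pi_pos
    field_simp
  rw [JJ_one (by linarith)] at h1
  have r0 := kap_rec hσ 0
  have r1 := kap_rec hσ 1
  have g1 : Gamma (3/2) = √π / 2 := by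
    have := Gamma_add_one (s := 1/2) (by norm_num)
    rw [Gamma_one_half_eq] at this
    norm_num at this ⊢
    rw [this]; ring
  have g2 : Gamma (σ + 3) = (σ + 2) * (σ + 1) * Gamma (σ + 1) := by
    rw [show σ + 3 = σ + 1 + 1 + 1 by ring, Gamma_add_one (by linarith), Gamma_add_one (by linarith)]
    ring
  have g3 := Gamma_mul_Gamma_add_half (σ + 1)
  have g4 : Gamma (2 * (σ + 1)) = (2 * σ + 1) * Gamma (2 * σ + 1) := by
    rw [show 2 * (σ + 1) = 2 * σ + 1 + 1 by ring, Gamma_add_one (by linarith)]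
  rw [g4, show σ + 1 + 1/2 = σ + 3/2 by ring, show 1 - 2 * (σ + 1) = - (2 * σ + 1) by ring,
    rpow_neg (by norm_num)] at g3
  have p4 : (4:ℝ) ^ (σ + 1) = 2 * 2 ^ (2 * σ + 1) := by
    rw [show (4:ℝ) = 2 ^ (2:ℝ) by norm_num, ← rpow_mul (by norm_num), show 2 * (σ + 1) = 2 * σ + 1 + 1 by ring,
      rpow_add_one (by norm_num) (2 * σ + 1)]
    ring
  have hp : (0:ℝ) < 2 ^ (2 * σ + 1) := by positivity
  have hG := Gamma_pos_of_pos (show 0 < σ + 1 by linarith)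
  have hsq : √π * √π = π := mul_self_sqrt pi_pos.le
  rw [g1, g2, p4] at h1
  push_cast at r0 r1
  norm_num at r0 r1
  have k1 : kap σ 1 = - σ / (1 + σ) * kap σ 0 := by
    field_simp; linarith
  have k2 : kap σ 2 = (1 - σ) / (2 + σ) * kap σ 1 := by
    field_simp; linarith
  rw [k2, k1] at h1
  have hpi := pi_pos
  have g3' : Gamma (σ + 3/2) = (2 * σ + 1) * Gamma (2 * σ + 1) * (2 ^ (2 * σ + 1))⁻¹ * √π / Gamma (σ + 1) := by
    rw [eq_div_iff hG.ne', ← g3]; ring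
  rw [g3'] at h1
  generalize Gamma (σ + 1) = G at *
  generalize Gamma (2 * σ + 1) = G2 at *
  generalize (2:ℝ) ^ (2 * σ + 1) = P at *
  have h5 : G2 / G ^ 2 * (2 * (2 * σ + 1) / ((1 + σ) * (2 + σ))) * (π / 2) =
      kap σ 0 * (2 * (2 * σ + 1) / ((1 + σ) * (2 + σ))) * (π / 2) := by
    have e1 : 2 * P * ((2 * σ + 1) * G2 * P⁻¹ * √π / G * (√π / 2) / ((σ + 2) * (σ + 1) * G)) =
      G2 / G ^ 2 * (2 * (2 * σ + 1) / ((1 + σ) * (2 + σ))) * (√π * √π / 2) := by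
      field_simp
      ring
    rw [hsq] at e1
    rw [← e1, h1]
    field_simp
    ring
  have h6 : (2 * (2 * σ + 1) / ((1 + σ) * (2 + σ))) * (π / 2) ≠ 0 := by positivity
  rw [mul_assoc, mul_assoc] at h5
  exact (mul_right_cancel₀ h6 h5).symm

lemma rb_eq {σ : ℝ} (hσ : 0 < σ) (k : ℕ) : (-1) ^ k * rbinom (2 * σ) (σ + k) = kap σ k := by
  induction k with
  | zero =>
    rw [kap_zero hσ]
    unfold rbinom
    push_cast
    rw [pow_zero, one_mul, add_zero, show 2 * σ - σ + 1 = σ + 1 by ring, sq]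
  | succ k ih =>
    have r := kap_rec hσ k
    rw [← ih] at r
    have h1 : (k:ℝ) + 1 + σ ≠ 0 := by positivity
    apply mul_left_cancel₀ h1
    rw [r]
    unfold rbinom
    push_cast
    have g1 := Gamma_add_one (s := σ + k + 1) (by positivity)
    rw [show 2 * σ - (σ + (k + 1)) + 1 = σ - k by ring, show 2 * σ - (σ + k) + 1 = σ - k + 1 by ring,
      show σ + (k + 1) + 1 = σ + k + 1 + 1 by ring, g1]
    have hG := Gamma_pos_of_pos (show 0 < σ + k + 1 by positivity)
    rcases eq_or_ne (σ - k) 0 with h | h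
    · have h2 : (k:ℝ) - σ = 0 := by linarith
      rw [h, h2, Gamma_zero]; simp
    · rw [Gamma_add_one h]
      have h2 : σ + k + 1 ≠ 0 := by positivity
      rw [pow_succ]
      by_cases h3 : Gamma (σ - k) = 0
      · rw [h3]; simp
      · field_simp
        ring

lemma rbinom_symm (a b : ℝ) : rbinom a (a - b) = rbinom a b := by
  unfold rbinom
  rw [show a - (a - b) + 1 = b + 1 by ring, mul_comm (Gamma (b + 1))]

lemma Kker_right {σ : ℝ} (hσ : 0 < σ) (m k : ℕ) : Kker σ m (m + k) = kap σ k - kap σ (m + (m + k)) := by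
  unfold Kker
  rw [← rb_eq hσ, ← rb_eq hσ]
  push_cast
  rw [show σ + m - (m + k) = 2 * σ - (σ + k) by ring, rbinom_symm, add_assoc]
  have : (-1:ℝ) ^ (m + (m + k)) = (-1) ^ k := by
    rw [← add_assoc, pow_add, ← two_mul, pow_mul]; simp
  rw [this]; ring

lemma Kker_symm {σ : ℝ} (m n : ℕ) : Kker σ m n = Kker σ n m := by
  unfold Kker
  rw [add_comm m n, show σ + m - n = 2 * σ - (σ + n - m) by ring, rbinom_symm,
    show σ + (m:ℝ) + n = σ + n + m by ring]

lemma Kker_eq {σ : ℝ} (hσ : 0 < σ) (m n : ℕ) :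
    Kker σ m n = kap σ (Int.natAbs ((n:ℤ) - m)) - kap σ (m + n) := by
  rcases le_total m n with h | h
  · obtain ⟨k, rfl⟩ := Nat.exists_eq_add_of_le h
    rw [Kker_right hσ]; congr 2; omega
  · obtain ⟨k, rfl⟩ := Nat.exists_eq_add_of_le h
    rw [Kker_symm, Kker_right hσ]; congr 2 <;> omega


lemma hasSum_congr_aux {ι : Type*} {f g : ι → ℝ} {a : ℝ} (h : ∀ i, f i = g i) : HasSum f a ↔ HasSum g a := by
  rw [funext h]

lemma kap_succ {σ : ℝ} (hσ : 0 < σ) (k : ℕ) : kap σ (k + 1) = (k - σ) / (k + 1 + σ) * kap σ k := by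
  have := kap_rec hσ k
  field_simp
  linarith

lemma kap_zero_pos {σ : ℝ} (hσ : 0 < σ) : 0 < kap σ 0 := by
  rw [kap_zero hσ]
  have := Gamma_pos_of_pos (show 0 < σ + 1 by linarith)
  have := Gamma_pos_of_pos (show 0 < 2 * σ + 1 by linarith)
  positivity

lemma kap_nonpos {σ : ℝ} (hσ : 0 < σ) (h1 : σ ≤ 1) {k : ℕ} (hk : 1 ≤ k) : kap σ k ≤ 0 := by
  induction k, hk using Nat.le_induction with
  | base =>
    rw [show 1 = 0 + 1 from rfl, kap_succ hσ 0]
    have := kap_zero_pos hσ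
    apply mul_nonpos_of_nonpos_of_nonneg _ this.le
    apply div_nonpos_of_nonpos_of_nonneg <;> push_cast <;> linarith
  | succ k hk ih =>
    have : (1:ℝ) ≤ k := by exact_mod_cast hk
    rw [kap_succ hσ k]
    apply mul_nonpos_of_nonneg_of_nonpos _ ih
    apply div_nonneg <;> linarith

lemma kap_diff {σ : ℝ} (hσ : 0 < σ) (k : ℕ) :
    kap σ (k + 1) - kap σ k = (1 + 2 * σ) / (k + 1 + σ) * (- kap σ k) := by
  rw [kap_succ hσ k]
  field_simp
  ring

lemma kap_mono_succ {σ : ℝ} (hσ : 0 < σ) (h1 : σ ≤ 1) {k : ℕ} (hk : 1 ≤ k) :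
    kap σ k ≤ kap σ (k + 1) := by
  have h := kap_diff hσ k
  have h2 := kap_nonpos hσ h1 hk
  have : 0 ≤ (1 + 2 * σ) / (k + 1 + σ) * (- kap σ k) := mul_nonneg (by positivity) (by linarith)
  linarith

lemma kap_mono {σ : ℝ} (hσ : 0 < σ) (h1 : σ ≤ 1) {k l : ℕ} (hk : 1 ≤ k) (hkl : k ≤ l) :
    kap σ k ≤ kap σ l := by
  induction l, hkl using Nat.le_induction with
  | base => exact le_rfl
  | succ l hl ih => exact ih.trans (kap_mono_succ hσ h1 (hk.trans hl))

lemma kap_diff_le {σ : ℝ} (hσ : 0 < σ) (h1 : σ ≤ 1) {k : ℕ} (hk : 1 ≤ k) (j : ℕ) :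
    kap σ (k + j) - kap σ k ≤ j * ((1 + 2 * σ) / k * (- kap σ k)) := by
  have hk' : (1:ℝ) ≤ k := by exact_mod_cast hk
  induction j with
  | zero => simp
  | succ j ih =>
    have h := kap_diff hσ (k + j)
    have h2 := kap_mono hσ h1 hk (show k ≤ k + j by omega)
    have h3 := kap_nonpos hσ h1 (show 1 ≤ k + j by omega)
    have : (1 + 2 * σ) / ((k + j : ℕ) + 1 + σ) * (- kap σ (k + j)) ≤ (1 + 2 * σ) / k * (- kap σ k) := by
      apply mul_le_mul _ (by linarith) (by linarith) (by positivity)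
      apply div_le_div_of_nonneg_left (by positivity) (by positivity)
      push_cast
      have : (0:ℝ) ≤ j := by positivity
      linarith
    push_cast
    rw [← add_assoc]
    linarith

lemma kap_bound {σ : ℝ} (hσ : 0 < σ) (h1 : σ ≤ 1) :
    ∃ C : ℝ, 0 < C ∧ ∀ k : ℕ, 1 ≤ k → - kap σ k ≤ C * (k : ℝ) ^ (-(1 + 2 * σ)) := by
  have hstep : ∀ k : ℕ, 1 ≤ k → - kap σ k * (k + σ) ^ (1 + 2 * σ) ≤ - kap σ 1 * (1 + σ) ^ (1 + 2 * σ) := by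
    intro k hk
    induction k, hk using Nat.le_induction with
    | base => simp
    | succ k hk ih =>
      have hk' : (1:ℝ) ≤ k := by exact_mod_cast hk
      refine le_trans ?_ ih
      rw [kap_succ hσ k]
      have hb := one_add_mul_self_le_rpow_one_add (s := -1 / (k + 1 + σ)) (p := 1 + 2 * σ)
        (by rw [le_div_iff₀ (by positivity)]; linarith) (by linarith)
      have e1 : 1 + (1 + 2 * σ) * (-1 / (k + 1 + σ)) = (k - σ) / (k + 1 + σ) := by
        field_simp; ring
      have e2 : 1 + -1 / (k + 1 + σ) = (k + σ) / (k + 1 + σ) := by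
        field_simp; ring
      rw [e1, e2, div_rpow (by positivity) (by positivity)] at hb
      have h2 := kap_nonpos hσ h1 hk
      push_cast
      have hp : 0 < ((k:ℝ) + 1 + σ) ^ (1 + 2 * σ) := by positivity
      calc -((k - σ) / (k + 1 + σ) * kap σ k) * (k + 1 + σ) ^ (1 + 2 * σ)
          = (- kap σ k) * ((k - σ) / (k + 1 + σ) * (k + 1 + σ) ^ (1 + 2 * σ)) := by ring
        _ ≤ (- kap σ k) * ((k + σ) ^ (1 + 2 * σ) / (k + 1 + σ) ^ (1 + 2 * σ) * (k + 1 + σ) ^ (1 + 2 * σ)) := by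
            gcongr
            linarith
        _ = _ := by rw [div_mul_cancel₀ _ hp.ne']
  refine ⟨- kap σ 1 * (1 + σ) ^ (1 + 2 * σ) + 1, ?_, ?_⟩
  · have := kap_nonpos hσ h1 (le_refl 1)
    have : 0 ≤ - kap σ 1 * (1 + σ) ^ (1 + 2 * σ) := mul_nonneg (by linarith) (by positivity)
    linarith
  · intro k hk
    have hk' : (1:ℝ) ≤ k := by exact_mod_cast hk
    have h2 := kap_nonpos hσ h1 hk
    rw [rpow_neg (by positivity), ← div_eq_mul_inv, le_div_iff₀ (by positivity)]
    have : - kap σ k * (k:ℝ) ^ (1 + 2 * σ) ≤ - kap σ k * (k + σ) ^ (1 + 2 * σ) := by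
      apply mul_le_mul_of_nonneg_left _ (by linarith)
      apply rpow_le_rpow <;> linarith
    linarith [hstep k hk]

lemma kap_summable {σ : ℝ} (hσ : 0 < σ) (h1 : σ ≤ 1) : Summable (fun k : ℕ => |kap σ k|) := by
  obtain ⟨C, hC, hb⟩ := kap_bound hσ h1
  rw [← summable_nat_add_iff 1]
  have h2 : Summable (fun k : ℕ => C * ((k:ℝ)) ^ (-(1 + 2 * σ))) :=
    (Real.summable_nat_rpow.mpr (by linarith)).mul_left C
  refine Summable.of_nonneg_of_le (fun _ => abs_nonneg _) ?_ ((summable_nat_add_iff 1).mpr h2)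
  intro k
  have := kap_nonpos hσ h1 (show 1 ≤ k + 1 by omega)
  rw [abs_of_nonpos this]
  exact hb _ (by omega)

lemma Kker_nonpos {σ : ℝ} (hσ : 0 < σ) (h1 : σ ≤ 1) {m n : ℕ} (h : m ≠ n) : Kker σ m n ≤ 0 := by
  rw [Kker_eq hσ]
  have := kap_mono hσ h1 (k := Int.natAbs ((n:ℤ) - m)) (l := m + n) (by omega) (by omega)
  linarith

lemma Kker_lower {σ : ℝ} (hσ : 0 < σ) (h1 : σ ≤ 1) (m : ℕ) {k : ℕ} (hk : 1 ≤ k) :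
    - Kker σ m (m + k) ≤ - kap σ k := by
  rw [Kker_right hσ]
  have := kap_nonpos hσ h1 (show 1 ≤ m + (m + k) by omega)
  linarith

lemma Kker_summable {σ : ℝ} (hσ : 0 < σ) (h1 : σ ≤ 1) (m : ℕ) :
    Summable (fun n : ℕ => |Kker σ m n| * n) := by
  rw [← summable_nat_add_iff (m + 1)]
  have h2 := ((summable_nat_add_iff 1).mpr (kap_summable hσ h1)).mul_left (2 * m * (1 + 2 * σ) * (m + 1))
  refine Summable.of_nonneg_of_le (fun _ => by positivity) ?_ h2
  intro j
  have hn := Kker_nonpos hσ h1 (m := m) (n := j + (m + 1)) (by omega)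
  rw [abs_of_nonpos hn, show j + (m + 1) = m + (j + 1) by ring, Kker_right hσ]
  have hd := kap_diff_le hσ h1 (show 1 ≤ j + 1 by omega) (2 * m)
  have h3 := kap_nonpos hσ h1 (show 1 ≤ j + 1 by omega)
  rw [abs_of_nonpos h3]
  rw [show m + (m + (j + 1)) = (j + 1) + 2 * m by ring]
  have hd2 : -(kap σ (j + 1) - kap σ (j + 1 + 2 * m)) ≤ 2 * m * ((1 + 2 * σ) / (j + 1) * (- kap σ (j + 1))) := by
    push_cast at hd
    linarith
  calc _ ≤ 2 * m * ((1 + 2 * σ) / (j + 1) * (- kap σ (j + 1))) * ((m + (j + 1) : ℕ) : ℝ) := by gcongr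
    _ = 2 * m * (1 + 2 * σ) * ((m + (j + 1)) / (j + 1)) * (- kap σ (j + 1)) := by
      push_cast; field_simp
    _ ≤ _ := by
      apply mul_le_mul_of_nonneg_right _ (by linarith)
      apply mul_le_mul_of_nonneg_left _ (by positivity)
      rw [div_le_iff₀ (by positivity)]
      have h4 : (0:ℝ) ≤ j := by positivity
      have h5 : (0:ℝ) ≤ m := by positivity
      nlinarith

lemma int_even {g : ℝ → ℝ} (hg : Continuous g) (h : ∀ x, g (-x) = g x) :
    ∫ t in (-π)..π, g t = 2 * ∫ t in (0:ℝ)..π, g t := by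
  rw [← intervalIntegral.integral_add_adjacent_intervals (b := 0) (hg.intervalIntegrable _ _) (hg.intervalIntegrable _ _)]
  have := intervalIntegral.integral_comp_neg (a := 0) (b := π) (f := g)
  simp only [h, neg_zero] at this
  rw [← this]; ring

lemma int_odd {g : ℝ → ℝ} (hg : Continuous g) (h : ∀ x, g (-x) = - g x) :
    ∫ t in (-π)..π, g t = 0 := by
  rw [← intervalIntegral.integral_add_adjacent_intervals (b := 0) (hg.intervalIntegrable _ _) (hg.intervalIntegrable _ _)]
  have := intervalIntegral.integral_comp_neg (a := 0) (b := π) (f := g)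
  simp only [h, neg_zero, intervalIntegral.integral_neg] at this
  rw [← this]; ring

instance fact_two_pi_pos : Fact (0 < 2 * π) := ⟨by positivity⟩

noncomputable def wC (σ : ℝ) (hσ : 0 < σ) : C(AddCircle (2 * π), ℂ) where
  toFun x := (((2 - 2 * (fourier 1 x : ℂ).re) ^ σ : ℝ) : ℂ)
  continuous_toFun := by
    refine Complex.continuous_ofReal.comp ?_
    refine Continuous.rpow_const ?_ (fun _ => Or.inr hσ.le)
    exact continuous_const.sub (continuous_const.mul (Complex.continuous_re.comp (map_continuous _)))

lemma fourier_2pi (n : ℤ) (t : ℝ) : (fourier n (t : AddCircle (2 * π)) : ℂ) = Complex.exp ((n * t : ℝ) * Complex.I) := by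
  rw [fourier_coe_apply]
  congr 1
  have := pi_pos
  push_cast
  field_simp

lemma wC_apply (σ : ℝ) (hσ : 0 < σ) (t : ℝ) : wC σ hσ (t : AddCircle (2 * π)) = ((ww t ^ σ : ℝ) : ℂ) := by
  show (((2 - 2 * (fourier 1 (t : AddCircle (2 * π)) : ℂ).re) ^ σ : ℝ) : ℂ) = _
  rw [fourier_2pi, Complex.exp_ofReal_mul_I_re]
  simp [ww]

lemma wC_coeff (σ : ℝ) (hσ : 0 < σ) (k : ℤ) : fourierCoeff (wC σ hσ) k = ((kap σ k.natAbs : ℝ) : ℂ) := by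
  rw [fourierCoeff_eq_intervalIntegral _ _ (-π)]
  have hc := ww_cont.rpow_const (p := σ) (fun _ => Or.inr hσ.le)
  have e : ∀ t : ℝ, (fourier (-k) (t : AddCircle (2 * π)) : ℂ) • (wC σ hσ) (t : AddCircle (2 * π))
     = ((ww t ^ σ * cos (k.natAbs * t) : ℝ) : ℂ) + ((ww t ^ σ * sin (-k * t) : ℝ) : ℂ) * Complex.I := by
    intro t
    rw [fourier_2pi, wC_apply, Complex.exp_mul_I, ← Complex.ofReal_cos, ← Complex.ofReal_sin]
    have : cos (k.natAbs * t) = cos (((-k : ℤ) : ℝ) * t) := by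
      push_cast
      rw [neg_mul, cos_neg, ← cos_abs, ← cos_abs (k * t), abs_mul, abs_mul]
      simp
    rw [this]
    push_cast
    simp only [smul_eq_mul]
    ring
  simp_rw [e]
  have c1 : Continuous (fun t => ww t ^ σ * cos (k.natAbs * t)) := kap_cont hσ _
  have c2 : Continuous (fun t => ww t ^ σ * sin (-k * t)) := by fun_prop
  have ev : ∀ t, ww (-t) = ww t := by intro t; simp [ww]
  have i1 : IntervalIntegrable (fun t => ((ww t ^ σ * cos (k.natAbs * t) : ℝ) : ℂ)) volume (-π) (-π + 2 * π) :=
    (Complex.continuous_ofReal.comp c1).intervalIntegrable _ _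
  have i2 : IntervalIntegrable (fun t => ((ww t ^ σ * sin (-k * t) : ℝ) : ℂ) * Complex.I) volume (-π) (-π + 2 * π) :=
    ((Complex.continuous_ofReal.comp c2).mul continuous_const).intervalIntegrable _ _
  rw [intervalIntegral.integral_add i1 i2,
    intervalIntegral.integral_mul_const, intervalIntegral.integral_ofReal, intervalIntegral.integral_ofReal]
  rw [show -π + 2 * π = π by ring, int_even c1 (by intro x; simp [ev]), int_odd c2 (by intro x; simp [ev])]
  unfold kap
  have := pi_pos
  simp only [Complex.ofReal_zero, zero_mul, add_zero]
  rw [Complex.real_smul, ← Complex.ofReal_mul]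
  congr 1
  field_simp

lemma kap_sum_int {σ : ℝ} (hσ : 0 < σ) (h1 : σ ≤ 1) (m : ℕ) (t : ℝ) :
    HasSum (fun n : ℤ => kap σ (n - m).natAbs * sin (n * t)) (ww t ^ σ * sin (m * t)) := by
  have hs : Summable (fourierCoeff (wC σ hσ)) := by
    have : Summable (fun k : ℤ => |kap σ k.natAbs|) := by
      refine Summable.of_nat_of_neg ?_ ?_ <;> simpa using kap_summable hσ h1
    refine Summable.of_norm ?_
    refine this.congr ?_
    intro k
    rw [wC_coeff, Complex.norm_real, Real.norm_eq_abs]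
  have h := has_pointwise_sum_fourier_series_of_summable hs (t : AddCircle (2 * π))
  have h2 := h.mul_left (Complex.exp ((m * t : ℝ) * Complex.I))
  have h3 := Complex.hasSum_im h2
  simp_rw [wC_coeff, wC_apply, fourier_2pi] at h3
  rw [← (Equiv.subRight (m : ℤ)).hasSum_iff] at h3
  rw [mul_comm (Complex.exp _) ((ww t ^ σ : ℝ) : ℂ), Complex.im_ofReal_mul, Complex.exp_ofReal_mul_I_im] at h3
  refine (hasSum_congr_aux ?_).mp h3
  intro n
  simp only [Function.comp, Equiv.subRight_apply, smul_eq_mul]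
  rw [mul_left_comm, ← Complex.exp_add, ← add_mul, ← Complex.ofReal_add, Complex.im_ofReal_mul,
      Complex.exp_ofReal_mul_I_im]
  congr 2
  push_cast; ring

lemma Kker_sum_sin {σ : ℝ} (hσ : 0 < σ) (h1 : σ ≤ 1) (m : ℕ) (t : ℝ) :
    HasSum (fun n : ℕ => Kker σ m n * sin (n * t)) (ww t ^ σ * sin (m * t)) := by
  have h := (kap_sum_int hσ h1 m t).nat_add_neg
  simp only [Int.cast_zero, zero_mul, sin_zero, mul_zero, add_zero] at h
  refine (hasSum_congr_aux ?_).mp h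
  intro n
  rw [Kker_eq hσ]
  have : (-(n:ℤ) - m).natAbs = m + n := by omega
  rw [this]
  push_cast
  rw [neg_mul, sin_neg]
  ring

lemma Kker_HH {σ α : ℝ} (hσ : 0 < σ) (h1 : σ ≤ 1) (hα : σ < α) (hα2 : α < 3/2) {m : ℕ} (hm : 1 ≤ m) :
    HasSum (fun n : ℕ => Kker σ m n * HH α n) (HH (α - σ) m) := by
  have hmeas : Measurable ww := ww_cont.measurable
  have hsum := Kker_summable hσ h1 m
  have key := intervalIntegral.hasSum_integral_of_dominated_convergence (a := 0) (b := π) (μ := volume)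
    (F := fun (n : ℕ) t => Kker σ m n * (ww t ^ (-α) * (sin t * sin (n * t))))
    (f := fun t => ww t ^ (-(α - σ)) * (sin t * sin (m * t)))
    (fun n t => |Kker σ m n| * n * ww t ^ (-α + 1))
    (by
      intro n
      refine Measurable.aestronglyMeasurable ?_
      fun_prop)
    (by
      intro n
      refine Eventually.of_forall ?_
      intro t ht
      rw [Set.uIoc_of_le pi_pos.le] at ht
      rw [Real.norm_eq_abs, abs_mul, mul_assoc]
      exact mul_le_mul_of_nonneg_left (JJ_bound _ _ ht.1 ht.2) (abs_nonneg _))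
    (Eventually.of_forall fun t _ => hsum.mul_right _)
    (by
      simp_rw [tsum_mul_right]
      exact (ww_rpow_int (by linarith)).const_mul _)
    (by
      refine Eventually.of_forall ?_
      intro t ht
      rw [Set.uIoc_of_le pi_pos.le] at ht
      have hw := ww_pos ht.1 ht.2
      have h := (Kker_sum_sin hσ h1 m t).mul_left (ww t ^ (-α) * sin t)
      have e : ww t ^ (-α) * sin t * (ww t ^ σ * sin (m * t)) = ww t ^ (-(α - σ)) * (sin t * sin (m * t)) := by
        rw [show -(α - σ) = -α + σ by ring, rpow_add hw]; ring
      rw [e] at h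
      refine (hasSum_congr_aux ?_).mp h
      intro n; ring)
  simp_rw [intervalIntegral.integral_const_mul] at key
  have e : (∫ t in (0:ℝ)..π, ww t ^ (-(α - σ)) * (sin t * sin (m * t))) = HH (α - σ) m :=
    JJ_eq_HH (by linarith) (by linarith) m hm
  rw [e] at key
  refine (hasSum_congr_aux ?_).mp key
  intro n
  rcases Nat.eq_zero_or_pos n with rfl | hn
  · simp [HH]
  · rw [← JJ_eq_HH (by linarith) hα2 n hn]
    rfl


lemma sym_energy (K : ℕ → ℕ → ℝ) (hK : ∀ m n, K m n = K n m) (h ψ : ℕ → ℝ) (S : Finset ℕ) :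
    ∑ m ∈ S, ∑ n ∈ S, K m n * (h m * ψ m) * (h n * ψ n) - ∑ m ∈ S, h m * ψ m ^ 2 * ∑ n ∈ S, K m n * h n
      = (1/2) * ∑ m ∈ S, ∑ n ∈ S, (- K m n * h m * h n * (ψ m - ψ n) ^ 2) := by
  have e1 : ∑ m ∈ S, ∑ n ∈ S, K m n * h m * h n * ψ n ^ 2 = ∑ m ∈ S, ∑ n ∈ S, K m n * h m * h n * ψ m ^ 2 := by
    rw [Finset.sum_comm]
    refine Finset.sum_congr rfl fun m _ => Finset.sum_congr rfl fun n _ => ?_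
    rw [hK n m]; ring
  have e2 : ∑ m ∈ S, h m * ψ m ^ 2 * ∑ n ∈ S, K m n * h n = ∑ m ∈ S, ∑ n ∈ S, K m n * h m * h n * ψ m ^ 2 := by
    refine Finset.sum_congr rfl fun m _ => ?_
    rw [Finset.mul_sum]
    refine Finset.sum_congr rfl fun n _ => ?_
    ring
  have e3 : ∑ m ∈ S, ∑ n ∈ S, (- K m n * h m * h n * (ψ m - ψ n) ^ 2) =
      - (∑ m ∈ S, ∑ n ∈ S, K m n * h m * h n * ψ m ^ 2) - (∑ m ∈ S, ∑ n ∈ S, K m n * h m * h n * ψ n ^ 2)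
      + 2 * ∑ m ∈ S, ∑ n ∈ S, K m n * (h m * ψ m) * (h n * ψ n) := by
    rw [Finset.mul_sum, ← Finset.sum_neg_distrib, ← Finset.sum_sub_distrib, ← Finset.sum_add_distrib]
    refine Finset.sum_congr rfl fun m _ => ?_
    rw [Finset.mul_sum, ← Finset.sum_neg_distrib, ← Finset.sum_sub_distrib, ← Finset.sum_add_distrib]
    refine Finset.sum_congr rfl fun n _ => ?_
    ring
  rw [e3, e2, e1]; ring

lemma Qform_eq (σ : ℝ) (f : ℕ → ℝ) (S : Finset ℕ) (hS : ∀ n, n ∉ S → f n = 0) :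
    Qform σ f = ∑ m ∈ S, ∑ n ∈ S, Kker σ m n * f m * f n := by
  unfold Qform
  rw [tsum_eq_sum (s := S)]
  · refine Finset.sum_congr rfl fun m _ => ?_
    rw [tsum_eq_sum (s := S)]
    intro n hn; rw [hS n hn, mul_zero]
  · intro m hm
    simp [hS m hm]

lemma wsum_eq (w f : ℕ → ℝ) (S : Finset ℕ) (hS : ∀ n, n ∉ S → f n = 0) :
    ∑' n, w n * f n ^ 2 = ∑ n ∈ S, w n * f n ^ 2 := by
  rw [tsum_eq_sum (s := S)]
  intro n hn; simp [hS n hn]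

lemma HH_nonneg {a : ℝ} (h0 : 0 < a) (h1 : a < 3/2) (n : ℕ) : 0 ≤ HH a n := by
  rcases Nat.eq_zero_or_pos n with rfl | hn
  · simp [HH]
  · exact (HH_pos h0 h1 hn).le

lemma KhhD_nonneg {σ α : ℝ} (hσ : 0 < σ) (h1 : σ ≤ 1) (hα : σ < α) (hα2 : α < 3/2) (ψ : ℕ → ℝ) (m n : ℕ) :
    0 ≤ - Kker σ m n * HH α m * HH α n * (ψ m - ψ n) ^ 2 := by
  rcases eq_or_ne m n with rfl | hmn
  · simp
  · have := Kker_nonpos hσ h1 hmn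
    have a1 := HH_nonneg (a := α) (by linarith) hα2 m
    have a2 := HH_nonneg (a := α) (by linarith) hα2 n
    have : 0 ≤ - Kker σ m n := by linarith
    positivity

lemma hardy {σ α : ℝ} (hσ : 0 < σ) (h1 : σ ≤ 1) (hα : σ < α) (hα2 : α < 3/2) (f : ℕ → ℝ) (f0 : f 0 = 0)
    (hf : (Function.support f).Finite) : ∑' n, Wweight σ α n * f n ^ 2 ≤ Qform σ f := by
  set S := hf.toFinset with hSd
  have hS : ∀ n, n ∉ S → f n = 0 := by
    intro n hn
    by_contra h
    exact hn (by simp [hSd, h])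
  have hS1 : ∀ n ∈ S, 1 ≤ n := by
    intro n hn
    have : f n ≠ 0 := by simpa [hSd] using hn
    rcases Nat.eq_zero_or_pos n with rfl | h
    · exact absurd f0 this
    · exact h
  rw [Qform_eq σ f S hS, wsum_eq _ f S hS]
  have hpos : ∀ n ∈ S, 0 < HH α n := fun n hn => HH_pos (by linarith) hα2 (hS1 n hn)
  set ψ : ℕ → ℝ := fun n => f n / HH α n with hψ
  have hfψ : ∀ n ∈ S, f n = HH α n * ψ n := by
    intro n hn
    have := hpos n hn
    simp only [hψ]; field_simp
  have hE := sym_energy (Kker σ) Kker_symm (HH α) ψ S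
  have e1 : ∑ m ∈ S, ∑ n ∈ S, Kker σ m n * f m * f n = ∑ m ∈ S, ∑ n ∈ S, Kker σ m n * (HH α m * ψ m) * (HH α n * ψ n) := by
    refine Finset.sum_congr rfl fun m hm => Finset.sum_congr rfl fun n hn => ?_
    rw [hfψ m hm, hfψ n hn]
  have e2 : 0 ≤ ∑ m ∈ S, ∑ n ∈ S, (- Kker σ m n * HH α m * HH α n * (ψ m - ψ n) ^ 2) :=
    Finset.sum_nonneg fun m _ => Finset.sum_nonneg fun n _ => KhhD_nonneg hσ h1 hα hα2 ψ m n
  have e3 : ∑ n ∈ S, Wweight σ α n * f n ^ 2 ≤ ∑ m ∈ S, HH α m * ψ m ^ 2 * ∑ n ∈ S, Kker σ m n * HH α n := by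
    refine Finset.sum_le_sum fun m hm => ?_
    have hT := Kker_HH hσ h1 hα hα2 (hS1 m hm)
    have hle : HH (α - σ) m ≤ ∑ n ∈ S, Kker σ m n * HH α n := by
      have := sum_le_hasSum S (f := fun n => -(Kker σ m n * HH α n)) (a := - HH (α - σ) m) ?_ hT.neg
      · rw [Finset.sum_neg_distrib] at this; linarith
      · intro n hn
        have hmn : m ≠ n := by rintro rfl; exact hn hm
        have a1 := Kker_nonpos hσ h1 hmn
        have a2 := HH_nonneg (a := α) (by linarith) hα2 n
        nlinarith
    rw [hfψ m hm]
    have hp := hpos m hm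
    calc Wweight σ α m * (HH α m * ψ m) ^ 2 = HH α m * ψ m ^ 2 * (Wweight σ α m * HH α m) := by ring
      _ = HH α m * ψ m ^ 2 * HH (α - σ) m := by rw [Wweight_eq hσ hα hα2 (hS1 m hm)]
      _ ≤ _ := mul_le_mul_of_nonneg_left hle (by positivity)
  rw [e1]
  linarith

lemma sum_sym_lt (g : ℕ → ℕ → ℝ) (hg : ∀ m n, g m n = g n m) (hd : ∀ m, g m m = 0) (M : ℕ) :
    (1/2) * ∑ m ∈ Finset.Ico 1 (M + 1), ∑ n ∈ Finset.Ico 1 (M + 1), g m n =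
      ∑ m ∈ Finset.Ico 1 (M + 1), ∑ n ∈ Finset.Ico (m + 1) (M + 1), g m n := by
  set S := Finset.Ico 1 (M + 1)
  have e1 : ∑ m ∈ S, ∑ n ∈ S, g m n = ∑ m ∈ S, ∑ n ∈ S, (if m < n then g m n else 0)
      + ∑ m ∈ S, ∑ n ∈ S, (if n < m then g m n else 0) := by
    rw [← Finset.sum_add_distrib]
    refine Finset.sum_congr rfl fun m _ => ?_
    rw [← Finset.sum_add_distrib]
    refine Finset.sum_congr rfl fun n _ => ?_
    rcases lt_trichotomy m n with h | h | h
    · simp [h, h.not_gt]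
    · subst h; simp [hd]
    · simp [h, h.not_gt]
  have e2 : ∑ m ∈ S, ∑ n ∈ S, (if n < m then g m n else 0) = ∑ m ∈ S, ∑ n ∈ S, (if m < n then g m n else 0) := by
    rw [Finset.sum_comm]
    refine Finset.sum_congr rfl fun m _ => Finset.sum_congr rfl fun n _ => ?_
    rw [hg]
  have e3 : ∑ m ∈ S, ∑ n ∈ S, (if m < n then g m n else 0) = ∑ m ∈ S, ∑ n ∈ Finset.Ico (m + 1) (M + 1), g m n := by
    refine Finset.sum_congr rfl fun m hm => ?_
    rw [← Finset.sum_filter]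
    congr 1
    ext n
    simp only [S, Finset.mem_filter, Finset.mem_Ico] at hm ⊢
    omega
  rw [e1, e2, e3]; ring

lemma upper {σ α : ℝ} (hσ : 0 < σ) (h1 : σ ≤ 1) (hα : σ < α) (hα2 : α < 3/2) (ψ : ℕ → ℝ) (N : ℕ)
    (hψ : ∀ n, N < n → ψ n = 0) (B : ℝ)
    (hB : ∀ M : ℕ, ∑ m ∈ Finset.Ico 1 (M + 1), ∑ n ∈ Finset.Ico (m + 1) (M + 1),
      (- Kker σ m n * HH α m * HH α n * (ψ m - ψ n) ^ 2) ≤ B) :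
    Qform σ (fun n => HH α n * ψ n) - ∑' n, Wweight σ α n * (HH α n * ψ n) ^ 2 ≤ B := by
  have hz : ∀ M, N ≤ M → ∀ n, n ∉ Finset.Ico 1 (M + 1) → HH α n * ψ n = 0 := by
    intro M hM n hn
    simp only [Finset.mem_Ico, not_and, not_lt] at hn
    rcases Nat.eq_zero_or_pos n with rfl | h
    · simp [HH]
    · rw [hψ n (by have := hn h; omega), mul_zero]
  have hM : ∀ M, N ≤ M → Qform σ (fun n => HH α n * ψ n) -
      ∑ m ∈ Finset.Ico 1 (N + 1), HH α m * ψ m ^ 2 * ∑ n ∈ Finset.Ico 1 (M + 1), Kker σ m n * HH α n ≤ B := by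
    intro M hM
    have hE := sym_energy (Kker σ) Kker_symm (HH α) ψ (Finset.Ico 1 (M + 1))
    rw [Qform_eq σ _ (Finset.Ico 1 (M + 1)) (hz M hM)]
    have e : ∑ m ∈ Finset.Ico 1 (M + 1), HH α m * ψ m ^ 2 * ∑ n ∈ Finset.Ico 1 (M + 1), Kker σ m n * HH α n =
      ∑ m ∈ Finset.Ico 1 (N + 1), HH α m * ψ m ^ 2 * ∑ n ∈ Finset.Ico 1 (M + 1), Kker σ m n * HH α n := by
      symm
      apply Finset.sum_subset (Finset.Ico_subset_Ico_right (by omega))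
      intro m _ hm2
      have := hz N le_rfl m hm2
      have : HH α m * ψ m ^ 2 = 0 := by
        rw [sq, ← mul_assoc, this, zero_mul]
      rw [this, zero_mul]
    rw [← e, hE, sum_sym_lt (fun m n => - Kker σ m n * HH α m * HH α n * (ψ m - ψ n) ^ 2)]
    · exact hB M
    · intro m n; rw [Kker_symm m n]; ring
    · intro m; simp
  have hlim : Tendsto (fun M : ℕ => Qform σ (fun n => HH α n * ψ n) -
      ∑ m ∈ Finset.Ico 1 (N + 1), HH α m * ψ m ^ 2 * ∑ n ∈ Finset.Ico 1 (M + 1), Kker σ m n * HH α n) atTop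
      (𝓝 (Qform σ (fun n => HH α n * ψ n) - ∑' n, Wweight σ α n * (HH α n * ψ n) ^ 2)) := by
    refine tendsto_const_nhds.sub ?_
    rw [wsum_eq _ (fun n => HH α n * ψ n) (Finset.Ico 1 (N + 1)) (hz N le_rfl)]
    refine tendsto_finsetSum _ fun m hm => ?_
    have hm1 : 1 ≤ m := (Finset.mem_Ico.mp hm).1
    have hT := (Kker_HH hσ h1 hα hα2 hm1).tendsto_sum_nat
    have hT2 := hT.comp (tendsto_add_atTop_nat 1)
    have e : ((fun n => ∑ i ∈ Finset.range n, Kker σ m i * HH α i) ∘ fun a => a + 1) =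
        fun M => ∑ n ∈ Finset.Ico 1 (M + 1), Kker σ m n * HH α n := by
      ext M
      simp only [Function.comp]
      rw [Finset.range_eq_Ico, Finset.sum_eq_sum_Ico_succ_bot (by omega)]
      simp [HH]
    rw [e] at hT2
    have := hT2.const_mul (HH α m * ψ m ^ 2)
    rw [← Wweight_eq hσ hα hα2 hm1] at this
    convert this using 2
    ring
  exact le_of_tendsto hlim (eventually_atTop.mpr ⟨N, hM⟩)


lemma Gamma_shift_prod {s : ℝ} (hs : 0 < s) (n : ℕ) :
    Gamma (n + 1 + s) = (∏ j ∈ Finset.range (n + 1), (s + j)) * Gamma s := by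
  induction n with
  | zero =>
    simp [add_comm (1:ℝ) s, Gamma_add_one hs.ne']
  | succ n ih =>
    rw [Finset.prod_range_succ, show ((n + 1 : ℕ) : ℝ) + 1 + s = (n + 1 + s) + 1 by push_cast; ring,
      Gamma_add_one (by positivity), ih]
    push_cast; ring

/-- normalized Gamma values. -/
noncomputable def uu (s : ℝ) (n : ℕ) : ℝ := Gamma (n + 1 + s) / (((n:ℝ) + 1) ^ s * (n.factorial : ℝ))

lemma uu_tendsto {s : ℝ} (hs : 0 < s) : Tendsto (uu s) atTop (𝓝 1) := by
  have hG := Gamma_pos_of_pos hs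
  have h1 := (tendsto_const_nhds (x := Gamma s)).div (Real.GammaSeq_tendsto_Gamma s) hG.ne'
  rw [div_self hG.ne'] at h1
  have h2 : Tendsto (fun n : ℕ => ((n:ℝ) / (n + 1)) ^ s) atTop (𝓝 1) := by
    have := (tendsto_natCast_div_add_atTop (1:ℝ)).rpow_const (p := s) (Or.inl one_ne_zero)
    simpa using this
  have h3 := h1.mul h2
  rw [one_mul] at h3
  refine h3.congr' ?_
  filter_upwards [eventually_ge_atTop 1] with n hn
  have hn' : (0:ℝ) < n := by exact_mod_cast hn
  unfold uu Real.GammaSeq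
  rw [Gamma_shift_prod hs, div_rpow (by positivity) (by positivity)]
  have : 0 < (n:ℝ) ^ s := by positivity
  have : 0 < ((n:ℝ) + 1) ^ s := by positivity
  have : (n.factorial : ℝ) ≠ 0 := by positivity
  have : ∏ j ∈ Finset.range (n + 1), (s + (j:ℝ)) ≠ 0 := by
    apply Finset.prod_ne_zero_iff.mpr
    intro j _; positivity
  simp only [Pi.div_apply]
  field_simp

lemma Gamma_uu (s : ℝ) (n : ℕ) : Gamma (n + 1 + s) = uu s n * (((n:ℝ) + 1) ^ s * (n.factorial : ℝ)) := by
  unfold uu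
  rw [div_mul_cancel₀]
  positivity

lemma HH_bound {a : ℝ} (h0 : 0 < a) (h1 : a < 3/2) :
    ∃ C : ℝ, 0 < C ∧ ∀ n : ℕ, 1 ≤ n → HH a n ≤ C * (n : ℝ) ^ (2 * a - 2) := by
  have t1 := uu_tendsto h0
  have t2 := uu_tendsto (show 0 < 2 - a by linarith)
  have t3 : Tendsto (fun n : ℕ => ((n:ℝ) + 1) / (n + a)) atTop (𝓝 1) := by
    have := (tendsto_natCast_div_add_atTop (a:ℝ)).add ((tendsto_const_nhds (x := (1:ℝ))).div_atTop
      (tendsto_natCast_atTop_atTop.atTop_add (tendsto_const_nhds (x := a))))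
    rw [add_zero] at this
    refine this.congr fun n => ?_
    ring
  have t := (t1.div t2 one_ne_zero).mul t3
  obtain ⟨C, hC⟩ := t.bddAbove_range
  set c := 4 ^ (1 - a) * Gamma (3/2 - a) * Gamma (3/2) / Gamma a with hc
  have hcp : 0 < c := by
    have := Gamma_pos_of_pos h0
    have := Gamma_pos_of_pos (show 0 < 3/2 - a by linarith)
    have := Gamma_pos_of_pos (show (0:ℝ) < 3/2 by norm_num)
    positivity
  refine ⟨c * (max C 1), by positivity, ?_⟩
  intro n hn
  obtain ⟨N, rfl⟩ : ∃ N, n = N + 1 := ⟨n - 1, by omega⟩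
  have hb : uu a N / uu (2 - a) N * (((N:ℝ) + 1) / (N + a)) ≤ max C 1 :=
    le_trans (hC ⟨N, rfl⟩) (le_max_left _ _)
  have e : HH a (N + 1) = c * (uu a N / uu (2 - a) N * (((N:ℝ) + 1) / (N + a))) * ((N + 1 : ℕ) : ℝ) ^ (2 * a - 2) := by
    unfold HH
    rw [← hc]
    have g1 : Gamma (((N + 1 : ℕ) : ℝ) + a - 1) = Gamma (N + 1 + a) / (N + a) := by
      rw [show (N:ℝ) + 1 + a = (N + a) + 1 by ring, Gamma_add_one (by positivity)]
      rw [mul_div_cancel_left₀ _ (by positivity)]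
      congr 1; push_cast; ring
    have g2 : Gamma (((N + 1 : ℕ) : ℝ) + 2 - a) = Gamma (N + 1 + (2 - a)) := by
      congr 1; push_cast; ring
    rw [g1, g2, Gamma_uu, Gamma_uu, show 2 * a - 2 = a - (2 - a) by ring, rpow_sub (by positivity) a (2 - a)]
    push_cast
    have : 0 < uu (2 - a) N := by
      unfold uu
      have := Gamma_pos_of_pos (show 0 < (N:ℝ) + 1 + (2 - a) by
        have : (0:ℝ) ≤ N := by positivity
        linarith)
      positivity
    have : (N.factorial : ℝ) ≠ 0 := by positivity
    have : ((N:ℝ) + 1) ^ (2 - a) ≠ 0 := by positivity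
    have : (N:ℝ) + a ≠ 0 := by positivity
    generalize ((N:ℝ) + 1) ^ (2 - a) = X at *
    generalize ((N:ℝ) + 1) ^ a = Y at *
    field_simp
  rw [e]
  gcongr

/-- ratio of Gammas. -/
noncomputable def gg (a : ℝ) (n : ℕ) : ℝ := Gamma (n + 1/2 + a) / Gamma (n + 1/2 - a)

lemma gg_pos {a : ℝ} (h0 : 0 < a) (h1 : a < 3/2) {n : ℕ} (hn : 1 ≤ n) : 0 < gg a n := by
  have hn' : (1:ℝ) ≤ n := by exact_mod_cast hn
  have := Gamma_pos_of_pos (show 0 < (n:ℝ) + 1/2 + a by linarith)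
  have := Gamma_pos_of_pos (show 0 < (n:ℝ) + 1/2 - a by linarith)
  unfold gg; positivity

lemma gg_succ {a : ℝ} (h0 : 0 < a) (h1 : a < 3/2) {n : ℕ} (hn : 1 ≤ n) :
    gg a (n + 1) = gg a n * ((n + 1/2 + a) / (n + 1/2 - a)) := by
  have hn' : (1:ℝ) ≤ n := by exact_mod_cast hn
  have := Gamma_pos_of_pos (show 0 < (n:ℝ) + 1/2 - a by linarith)
  unfold gg
  rw [show ((n + 1 : ℕ) : ℝ) + 1/2 + a = (n + 1/2 + a) + 1 by push_cast; ring,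
    show ((n + 1 : ℕ) : ℝ) + 1/2 - a = (n + 1/2 - a) + 1 by push_cast; ring,
    Gamma_add_one (by linarith), Gamma_add_one (by linarith)]
  rw [mul_div_mul_comm, mul_comm]

lemma gg_uu {a : ℝ} (h0 : 0 < a) (h1 : a < 3/2) (n : ℕ) :
    gg a (n + 2) = uu (3/2 + a) n / uu (3/2 - a) n * ((n:ℝ) + 1) ^ (2 * a) := by
  unfold gg
  rw [show ((n + 2 : ℕ) : ℝ) + 1/2 + a = n + 1 + (3/2 + a) by push_cast; ring,
    show ((n + 2 : ℕ) : ℝ) + 1/2 - a = n + 1 + (3/2 - a) by push_cast; ring, Gamma_uu, Gamma_uu,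
    show 2 * a = (3/2 + a) - (3/2 - a) by ring, rpow_sub (by positivity) (3/2 + a) (3/2 - a)]
  have : (n.factorial : ℝ) ≠ 0 := by positivity
  have : ((n:ℝ) + 1) ^ (3/2 - a) ≠ 0 := by positivity
  have : 0 < uu (3/2 - a) n := by
    unfold uu
    have := Gamma_pos_of_pos (show 0 < (n:ℝ) + 1 + (3/2 - a) by
      have : (0:ℝ) ≤ n := by positivity
      linarith)
    positivity
  generalize ((n:ℝ) + 1) ^ (3/2 - a) = X at *
  generalize ((n:ℝ) + 1) ^ (3/2 + a) = Y at *
  generalize uu (3/2 - a) n = U at *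
  generalize uu (3/2 + a) n = V at *
  field_simp

lemma gg_compare {p q s t : ℝ} (hp : 0 < p) (hp1 : p < 3/2) (hq : 0 < q) (hq1 : q < 3/2)
    (hs : 0 < s) (hs1 : s < 3/2) (ht : 0 < t) (ht1 : t < 3/2) (hsum : p + q = s + t) (hprod : s * t < p * q)
    {n : ℕ} (hn : 1 ≤ n) : gg s n * gg t n < gg p n * gg q n := by
  set r : ℕ → ℝ := fun n => gg p n * gg q n / (gg s n * gg t n) with hr
  have hpos : ∀ n, 1 ≤ n → 0 < r n := fun n hn => by
    have := gg_pos hp hp1 hn; have := gg_pos hq hq1 hn; have := gg_pos hs hs1 hn; have := gg_pos ht ht1 hn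
    simp only [hr]; positivity
  have hdec : ∀ n, 1 ≤ n → r (n + 1) < r n := by
    intro n hn
    have hn' : (1:ℝ) ≤ n := by exact_mod_cast hn
    have a1 := gg_pos hp hp1 hn; have a2 := gg_pos hq hq1 hn
    have a3 := gg_pos hs hs1 hn; have a4 := gg_pos ht ht1 hn
    set x : ℝ := n + 1/2 with hx
    have hx1 : 3/2 ≤ x := by linarith
    have b1 : 0 < x - p := by linarith
    have b2 : 0 < x - q := by linarith
    have b3 : 0 < x - s := by linarith
    have b4 : 0 < x - t := by linarith
    have e : r (n + 1) = r n * ((x + p) * (x + q) * ((x - s) * (x - t)) / ((x - p) * (x - q) * ((x + s) * (x + t)))) := by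
      simp only [hr]
      rw [gg_succ hp hp1 hn, gg_succ hq hq1 hn, gg_succ hs hs1 hn, gg_succ ht ht1 hn, ← hx]
      have : x + s ≠ 0 := by positivity
      have : x + t ≠ 0 := by positivity
      field_simp
    rw [e]
    have h2 := hpos n hn
    apply mul_lt_of_lt_one_right h2
    rw [div_lt_one (by positivity)]
    have key : (x - p) * (x - q) * ((x + s) * (x + t)) - (x + p) * (x + q) * ((x - s) * (x - t))
      = 2 * x * (p + q) * (p * q - s * t) := by
      have : q = s + t - p := by linarith
      subst this; ring
    have : 0 < 2 * x * (p + q) * (p * q - s * t) := by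
      have : 0 < p * q - s * t := by linarith
      positivity
    linarith
  have hlim : Tendsto r atTop (𝓝 1) := by
    rw [← tendsto_add_atTop_iff_nat 2]
    have T : ∀ a : ℝ, 0 < a → a < 3/2 → Tendsto (fun n => uu (3/2 + a) n / uu (3/2 - a) n) atTop (𝓝 1) := by
      intro a ha ha1
      have := (uu_tendsto (show 0 < 3/2 + a by linarith)).div (uu_tendsto (show 0 < 3/2 - a by linarith)) one_ne_zero
      rw [div_one] at this
      exact this
    have := ((T p hp hp1).mul (T q hq hq1)).div ((T s hs hs1).mul (T t ht ht1)) (by norm_num)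
    have h1 : (1:ℝ) * 1 / (1 * 1) = 1 := by norm_num
    rw [h1] at this
    refine this.congr fun n => ?_
    simp only [hr, Pi.mul_apply, Pi.div_apply]
    rw [gg_uu hp hp1, gg_uu hq hq1, gg_uu hs hs1, gg_uu ht ht1]
    have E : ((n:ℝ) + 1) ^ (2 * p) * ((n:ℝ) + 1) ^ (2 * q) = ((n:ℝ) + 1) ^ (2 * s) * ((n:ℝ) + 1) ^ (2 * t) := by
      rw [← rpow_add (by positivity), ← rpow_add (by positivity)]
      congr 1; linarith
    rw [mul_mul_mul_comm, E, mul_mul_mul_comm (uu (3/2 + s) n / _), mul_div_mul_right]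
    positivity
  have hle : ∀ n, 1 ≤ n → 1 ≤ r n := by
    intro n hn
    refine le_of_tendsto hlim ?_
    filter_upwards [eventually_ge_atTop n] with k hk
    induction k, hk using Nat.le_induction with
    | base => exact le_rfl
    | succ k hk ih => exact (hdec k (by omega)).le.trans ih
  have h3 : 1 < r n := (hle (n + 1) (by omega)).trans_lt (hdec n hn)
  have a3 := gg_pos hs hs1 hn
  have a4 := gg_pos ht ht1 hn
  simp only [hr] at h3
  rwa [one_lt_div (by positivity)] at h3

lemma W_compare {σ α : ℝ} (hσ : 0 < σ) (h1 : σ < α) (h2 : α < 3/2) (h3 : (3 + 2 * σ) / 4 < α) {n : ℕ} (hn : 1 ≤ n) :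
    Wweight σ α n < Wweight σ (σ + 3/2 - α) n := by
  have hn' : (1:ℝ) ≤ n := by exact_mod_cast hn
  have key := gg_compare (p := α - σ) (q := σ + 3/2 - α) (s := 3/2 - α) (t := α) (by linarith) (by linarith)
    (by linarith) (by linarith) (by linarith) (by linarith) (by linarith) (by linarith) (by ring)
    (by nlinarith) hn
  have p1 := gg_pos (a := α - σ) (by linarith) (by linarith) hn
  have p2 := gg_pos (a := σ + 3/2 - α) (by linarith) (by linarith) hn
  have p3 := gg_pos (a := 3/2 - α) (by linarith) (by linarith) hn
  have p4 := gg_pos (a := α) (by linarith) (by linarith) hn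
  set c := 4 ^ σ * (Gamma (3/2 - α + σ) * Gamma α / (Gamma (α - σ) * Gamma (3/2 - α))) with hc
  have hcp : 0 < c := by
    have := Gamma_pos_of_pos (show 0 < α by linarith)
    have := Gamma_pos_of_pos (show 0 < 3/2 - α by linarith)
    have := Gamma_pos_of_pos (show 0 < 3/2 - α + σ by linarith)
    have := Gamma_pos_of_pos (show 0 < α - σ by linarith)
    positivity
  have e1 : Wweight σ α n = c * (gg (3/2 - α) n / gg (σ + 3/2 - α) n) := by
    unfold Wweight gg
    rw [← hc, show (n:ℝ) + 1/2 + (3/2 - α) = n - α + 2 by ring, show (n:ℝ) + 1/2 - (3/2 - α) = n + α - 1 by ring,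
      show (n:ℝ) + 1/2 + (σ + 3/2 - α) = n - α + σ + 2 by ring, show (n:ℝ) + 1/2 - (σ + 3/2 - α) = n + α - σ - 1 by ring]
    rw [div_div_div_eq, mul_comm (Gamma (n + α - σ - 1)), mul_comm (Gamma (n - α + σ + 2))]
  have e2 : Wweight σ (σ + 3/2 - α) n = c * (gg (α - σ) n / gg α n) := by
    unfold Wweight gg
    rw [hc, show 3/2 - (σ + 3/2 - α) + σ = α by ring, show σ + 3/2 - α = 3/2 - α + σ by ring,
      show 3/2 - α + σ - σ = 3/2 - α by ring, show 3/2 - (3/2 - α + σ) = α - σ by ring,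
      show (n:ℝ) + (3/2 - α + σ) - σ - 1 = n + 1/2 - α by ring,
      show (n:ℝ) - (3/2 - α + σ) + 2 = n + 1/2 + (α - σ) by ring,
      show (n:ℝ) - (3/2 - α + σ) + σ + 2 = n + 1/2 + α by ring,
      show (n:ℝ) + (3/2 - α + σ) - 1 = n + 1/2 - (α - σ) by ring]
    rw [div_div_div_eq, mul_comm (Gamma (3/2 - α + σ)), mul_comm (Gamma (α - σ)), mul_comm (Gamma ((n:ℝ) + 1/2 - α)), mul_comm (Gamma ((n:ℝ) + 1/2 + α))]
  rw [e1, e2]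
  apply mul_lt_mul_of_pos_left _ hcp
  rw [div_lt_div_iff₀ p2 p4]
  exact key

lemma not_crit {σ α : ℝ} (hσ : 0 < σ) (hσ1 : σ ≤ 1) (h1 : σ < α) (h2 : α < 3/2)
    (hc : ∀ Wt : ℕ → ℝ, (∀ n, 0 ≤ Wt n) → (∃ n, 1 ≤ n ∧ Wt n ≠ 0) →
        ∃ f : ℕ → ℝ, f 0 = 0 ∧ (Function.support f).Finite ∧
          Qform σ f < ∑' n : ℕ, (Wweight σ α n + Wt n) * (f n) ^ 2) : α ≤ (3 + 2 * σ) / 4 := by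
  by_contra h3
  push Not at h3
  obtain ⟨f, f0, hf, hlt⟩ := hc (fun n => if n = 0 then 0 else Wweight σ (σ + 3/2 - α) n - Wweight σ α n)
    (by
      intro n
      split_ifs with h
      · exact le_rfl
      · have := W_compare hσ h1 h2 h3 (n := n) (by omega)
        linarith)
    ⟨1, le_rfl, by
      have := W_compare hσ h1 h2 h3 (n := 1) le_rfl
      simp only [one_ne_zero, if_false]
      linarith⟩
  have := hardy hσ hσ1 (α := σ + 3/2 - α) (by linarith) (by linarith) f f0 hf
  refine absurd this (not_le.mpr (hlt.trans_eq ?_))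
  refine tsum_congr fun n => ?_
  rcases Nat.eq_zero_or_pos n with rfl | hn
  · simp [f0]
  · rw [if_neg (by omega)]; ring


lemma sum_low {s : ℝ} (hs : 0 < s) (m : ℕ) :
    min s 1 * ∑ k ∈ Finset.Ico 1 (m + 1), (k:ℝ) ^ (s - 1) ≤ (m:ℝ) ^ s := by
  induction m with
  | zero => simp [hs.ne']
  | succ m ih =>
    rw [Finset.sum_Ico_succ_top (by omega), mul_add]
    have hm : (0:ℝ) < ((m + 1 : ℕ) : ℝ) := by positivity
    have hm1 : (1:ℝ) ≤ ((m + 1 : ℕ) : ℝ) := by push_cast; linarith [(Nat.cast_nonneg m : (0:ℝ) ≤ m)]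
    set x : ℝ := ((m + 1 : ℕ) : ℝ) with hx
    have hmx : (m:ℝ) = x * (1 + -1 / x) := by rw [hx]; push_cast; field_simp; ring
    have hxi : -1 ≤ -1 / x := by rw [le_div_iff₀ hm]; linarith
    have hxi2 : -1 / x ≤ 0 := div_nonpos_of_nonpos_of_nonneg (by norm_num) hm.le
    have hc : 0 < min s 1 := lt_min hs one_pos
    have h1 : (1 + -1 / x) ^ s ≤ (1 + -1 / x) ^ (min s 1) :=
      rpow_le_rpow_of_exponent_ge' (by linarith) (by linarith) hc.le (min_le_left _ _)
    have h2 := rpow_one_add_le_one_add_mul_self hxi hc.le (min_le_right s 1)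
    have h3 : (m:ℝ) ^ s = x ^ s * (1 + -1 / x) ^ s := by
      rw [hmx, mul_rpow hm.le (by linarith)]
    have h4 : x ^ (s - 1) = x ^ s / x := by rw [rpow_sub hm, rpow_one]
    have h5 : 0 < x ^ s := by positivity
    have h6 : x ^ s * (1 + -1 / x) ^ s ≤ x ^ s * (1 + min s 1 * (-1 / x)) :=
      mul_le_mul_of_nonneg_left (h1.trans h2) h5.le
    rw [h4]
    have h7 : x ^ s * (1 + min s 1 * (-1 / x)) = x ^ s - min s 1 * (x ^ s / x) := by
      field_simp; ring
    linarith

lemma sum_tail {s : ℝ} (hs : 0 < s) {m : ℕ} (hm : 1 ≤ m) (K : ℕ) :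
    ∑ k ∈ Finset.Ico (m + 1) (m + 1 + K), (k:ℝ) ^ (-1 - s) ≤ ((m:ℝ) ^ (-s) - ((m + K : ℕ) : ℝ) ^ (-s)) / s := by
  induction K with
  | zero => simp
  | succ K ih =>
    rw [show m + 1 + (K + 1) = (m + 1 + K) + 1 by ring, Finset.sum_Ico_succ_top (by omega)]
    have hy : (1:ℝ) ≤ ((m + K : ℕ) : ℝ) := by exact_mod_cast (show 1 ≤ m + K by omega)
    set y : ℝ := ((m + K : ℕ) : ℝ) with hyd
    have e1 : ((m + 1 + K : ℕ) : ℝ) = y + 1 := by rw [hyd]; push_cast; ring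
    have e2 : ((m + (K + 1) : ℕ) : ℝ) = y + 1 := by rw [hyd]; push_cast; ring
    rw [e1, e2]
    have hp : 0 < (y + 1) ^ (-s) := by positivity
    have h1 : (y + 1) ^ (-s) * (1 + s / (y + 1)) ≤ y ^ (-s) := by
      have : y ^ (-s) = (y + 1) ^ (-s) * (y / (y + 1)) ^ (-s) := by
        rw [← mul_rpow (by positivity) (by positivity)]; congr 1; field_simp
      rw [this]
      apply mul_le_mul_of_nonneg_left _ hp.le
      rw [rpow_def_of_pos (by positivity)]
      have h2 : log (y / (y + 1)) ≤ - (1 / (y + 1)) := by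
        have := log_le_sub_one_of_pos (show 0 < y / (y + 1) by positivity)
        have e : y / (y + 1) - 1 = - (1 / (y + 1)) := by field_simp; ring
        linarith
      have h3 := add_one_le_exp (log (y / (y + 1)) * -s)
      have h4 : s / (y + 1) = s * (1 / (y + 1)) := by ring
      nlinarith
    have h2 : (y + 1) ^ (-1 - s) = (y + 1) ^ (-s) / (y + 1) := by
      rw [show -1 - s = -s - 1 by ring, rpow_sub (by positivity), rpow_one]
    rw [h2]
    have h3 : (y + 1) ^ (-s) / (y + 1) ≤ (y ^ (-s) - (y + 1) ^ (-s)) / s := by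
      rw [le_div_iff₀ hs]
      have : (y + 1) ^ (-s) * (1 + s / (y + 1)) = (y + 1) ^ (-s) + (y + 1) ^ (-s) / (y + 1) * s := by ring
      linarith
    have h4 : ((m:ℝ) ^ (-s) - (y + 1) ^ (-s)) / s = ((m:ℝ) ^ (-s) - y ^ (-s)) / s + (y ^ (-s) - (y + 1) ^ (-s)) / s := by ring
    linarith

lemma sum_tail' {s : ℝ} (hs : 0 < s) {m : ℕ} (hm : 1 ≤ m) (K : ℕ) :
    ∑ k ∈ Finset.Ico (m + 1) (m + 1 + K), (k:ℝ) ^ (-1 - s) ≤ (m:ℝ) ^ (-s) / s := by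
  refine (sum_tail hs hm K).trans ?_
  have : 0 ≤ ((m + K : ℕ) : ℝ) ^ (-s) := by positivity
  gcongr
  linarith

lemma rpow_dbl {x y b : ℝ} (hx : 0 < x) (hxy : x ≤ y) (hy : y ≤ 2 * x) : y ^ b ≤ 2 ^ |b| * x ^ b := by
  have e : y ^ b = (y / x) ^ b * x ^ b := by
    rw [← mul_rpow (by have := hx.trans_le hxy; positivity) hx.le, div_mul_cancel₀ _ hx.ne']
  rw [e]
  have h1 : 1 ≤ y / x := by rw [le_div_iff₀ hx]; linarith
  have h2 : y / x ≤ 2 := by rw [div_le_iff₀ hx]; linarith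
  apply mul_le_mul_of_nonneg_right _ (by positivity)
  calc (y / x) ^ b ≤ (y / x) ^ |b| := rpow_le_rpow_of_exponent_le h1 (le_abs_self b)
    _ ≤ 2 ^ |b| := rpow_le_rpow (by linarith) h2 (abs_nonneg b)

lemma kap_sq {σ : ℝ} (hσ : 0 < σ) (h1 : σ ≤ 1) :
    ∃ C : ℝ, 0 < C ∧ ∀ m : ℕ, 1 ≤ m → ∑ k ∈ Finset.Ico 1 (m + 1), (k:ℝ) ^ 2 * (- kap σ k) ≤ C * (m:ℝ) ^ (2 - 2 * σ) := by
  rcases h1.lt_or_eq with h | rfl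
  · obtain ⟨C, hC, hb⟩ := kap_bound hσ h1
    have hs : 0 < 2 - 2 * σ := by linarith
    have hc : 0 < min (2 - 2 * σ) 1 := lt_min hs one_pos
    refine ⟨C / min (2 - 2 * σ) 1, by positivity, ?_⟩
    intro m hm
    have h2 := sum_low hs m
    calc ∑ k ∈ Finset.Ico 1 (m + 1), (k:ℝ) ^ 2 * (- kap σ k)
        ≤ ∑ k ∈ Finset.Ico 1 (m + 1), C * (k:ℝ) ^ (2 - 2 * σ - 1) := by
          apply Finset.sum_le_sum
          intro k hk
          rw [Finset.mem_Ico] at hk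
          have hk' : (0:ℝ) < k := by exact_mod_cast hk.1
          have := hb k hk.1
          have e : (k:ℝ) ^ (2 - 2 * σ - 1) = (k:ℝ) ^ 2 * (k:ℝ) ^ (-(1 + 2 * σ)) := by
            rw [← rpow_natCast, ← rpow_add hk']; congr 1; push_cast; ring
          rw [e]
          have h3 : (0:ℝ) ≤ (k:ℝ) ^ 2 := by positivity
          nlinarith
      _ = C / min (2 - 2 * σ) 1 * (min (2 - 2 * σ) 1 * ∑ k ∈ Finset.Ico 1 (m + 1), (k:ℝ) ^ (2 - 2 * σ - 1)) := by
          rw [← Finset.mul_sum]; field_simp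
      _ ≤ _ := by gcongr
  · have hz : ∀ k : ℕ, kap 1 (k + 2) = 0 := by
      intro k
      induction k with
      | zero =>
        have := kap_succ (σ := 1) one_pos 1
        rw [this]; simp
      | succ k ih =>
        have := kap_succ (σ := 1) one_pos (k + 2)
        rw [this, ih, mul_zero]
    refine ⟨- kap 1 1 + 1, ?_, ?_⟩
    · have := kap_nonpos one_pos h1 (le_refl 1)
      linarith
    · intro m hm
      rw [Finset.sum_eq_single 1]
      · norm_num
      · intro k hk hk1
        rw [Finset.mem_Ico] at hk
        obtain ⟨j, rfl⟩ : ∃ j, k = j + 2 := ⟨k - 2, by omega⟩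
        rw [hz]; simp
      · intro h; simp at h; omega

lemma innersum_bd {σ β : ℝ} (hσ : 0 < σ) (h1 : σ ≤ 1) (hβ : β ≤ σ - 1/2) :
    ∃ C : ℝ, 0 < C ∧ ∀ m : ℕ, 1 ≤ m → ∀ K : ℕ, ∑ k ∈ Finset.Ico 1 K,
      (- kap σ k) * (((m + k : ℕ) : ℝ) ^ β * log (1 + k / m) ^ 2) ≤ C * (m:ℝ) ^ (β - 2 * σ) := by
  obtain ⟨C1, hC1, hb1⟩ := kap_sq hσ h1
  obtain ⟨C2, hC2, hb2⟩ := kap_bound hσ h1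
  set s := 2 * σ - β - σ / 2 with hs
  have hs0 : 0 < s := by linarith
  set D := C2 * (2 ^ |β| * (2 ^ (σ / 2) / (σ / 4) ^ 2)) with hD
  have hD0 : 0 < D := by positivity
  refine ⟨2 ^ |β| * C1 + D / s, by positivity, ?_⟩
  intro m hm K
  have hm' : (1:ℝ) ≤ m := by exact_mod_cast hm
  have hm0 : (0:ℝ) < m := by linarith
  have hlog : ∀ k : ℕ, 0 ≤ log (1 + (k:ℝ) / m) := fun k => log_nonneg (by
    have : (0:ℝ) ≤ k / m := by positivity
    linarith)
  have hnn : ∀ k : ℕ, 1 ≤ k → 0 ≤ (- kap σ k) * (((m + k : ℕ) : ℝ) ^ β * log (1 + k / m) ^ 2) := by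
    intro k hk
    have := kap_nonpos hσ h1 hk
    exact mul_nonneg (by linarith) (by positivity)
  have hext : ∑ k ∈ Finset.Ico 1 K, (- kap σ k) * (((m + k : ℕ) : ℝ) ^ β * log (1 + k / m) ^ 2) ≤
      ∑ k ∈ Finset.Ico 1 (m + 1 + K), (- kap σ k) * (((m + k : ℕ) : ℝ) ^ β * log (1 + k / m) ^ 2) := by
    apply Finset.sum_le_sum_of_subset_of_nonneg
    · apply Finset.Ico_subset_Ico <;> omega
    · intro k hk _
      exact hnn k (Finset.mem_Ico.mp hk).1
  refine hext.trans ?_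
  rw [← Finset.sum_Ico_consecutive _ (show 1 ≤ m + 1 by omega) (show m + 1 ≤ m + 1 + K by omega), add_mul]
  apply add_le_add
  · calc _ ≤ ∑ k ∈ Finset.Ico 1 (m + 1), 2 ^ |β| * (m:ℝ) ^ (β - 2) * ((k:ℝ) ^ 2 * (- kap σ k)) := by
          apply Finset.sum_le_sum
          intro k hk
          rw [Finset.mem_Ico] at hk
          have hk1 : (k:ℝ) ≤ m := by exact_mod_cast (show k ≤ m by omega)
          have hk0 : (0:ℝ) ≤ k := by positivity
          have hkap := kap_nonpos hσ h1 hk.1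
          have a1 : ((m + k : ℕ) : ℝ) ^ β ≤ 2 ^ |β| * (m:ℝ) ^ β := by
            apply rpow_dbl hm0 <;> push_cast <;> linarith
          have a2 : log (1 + (k:ℝ) / m) ≤ k / m := by
            have := log_le_sub_one_of_pos (show 0 < 1 + (k:ℝ) / m by positivity)
            linarith
          have a3 : log (1 + (k:ℝ) / m) ^ 2 ≤ (k / m) ^ 2 := pow_le_pow_left₀ (hlog k) a2 2
          have a4 : ((m + k : ℕ) : ℝ) ^ β * log (1 + k / m) ^ 2 ≤ (2 ^ |β| * (m:ℝ) ^ β) * (k / m) ^ 2 :=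
            mul_le_mul a1 a3 (by positivity) (by positivity)
          have e : (m:ℝ) ^ (β - 2) = (m:ℝ) ^ β / (m:ℝ) ^ 2 := by
            rw [rpow_sub hm0]; norm_num
          rw [e]
          calc _ ≤ (- kap σ k) * ((2 ^ |β| * (m:ℝ) ^ β) * (k / m) ^ 2) :=
                mul_le_mul_of_nonneg_left a4 (by linarith)
            _ = _ := by ring
      _ = 2 ^ |β| * (m:ℝ) ^ (β - 2) * ∑ k ∈ Finset.Ico 1 (m + 1), ((k:ℝ) ^ 2 * (- kap σ k)) := by
          rw [Finset.mul_sum]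
      _ ≤ 2 ^ |β| * (m:ℝ) ^ (β - 2) * (C1 * (m:ℝ) ^ (2 - 2 * σ)) := by
          gcongr
          exact hb1 m hm
      _ = 2 ^ |β| * C1 * ((m:ℝ) ^ (β - 2) * (m:ℝ) ^ (2 - 2 * σ)) := by ring
      _ = _ := by rw [← rpow_add hm0]; congr 2; ring
  · calc _ ≤ ∑ k ∈ Finset.Ico (m + 1) (m + 1 + K), D * (m:ℝ) ^ (-(σ / 2)) * (k:ℝ) ^ (-1 - s) := by
          apply Finset.sum_le_sum
          intro k hk
          rw [Finset.mem_Ico] at hk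
          have hk1 : (m:ℝ) ≤ k := by exact_mod_cast (show m ≤ k by omega)
          have hk0 : (0:ℝ) < k := by linarith
          have hkap := kap_nonpos hσ h1 (show 1 ≤ k by omega)
          have a1 : ((m + k : ℕ) : ℝ) ^ β ≤ 2 ^ |β| * (k:ℝ) ^ β := by
            apply rpow_dbl hk0 <;> push_cast <;> linarith
          have hkm : 1 ≤ (k:ℝ) / m := by rw [le_div_iff₀ hm0]; linarith
          have a2 : log (1 + (k:ℝ) / m) ≤ (2 * (k / m)) ^ (σ / 4) / (σ / 4) := by
            refine le_trans ?_ (log_le_rpow_div (by positivity) (by positivity))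
            exact log_le_log (by positivity) (by linarith)
          have a3 : log (1 + (k:ℝ) / m) ^ 2 ≤ ((2 * (k / m)) ^ (σ / 4) / (σ / 4)) ^ 2 :=
            pow_le_pow_left₀ (hlog k) a2 2
          have e3 : ((2 * ((k:ℝ) / m)) ^ (σ / 4) / (σ / 4)) ^ 2 =
              2 ^ (σ / 2) / (σ / 4) ^ 2 * ((k:ℝ) ^ (σ / 2) * (m:ℝ) ^ (-(σ / 2))) := by
            rw [div_pow, ← rpow_natCast, ← rpow_mul (by positivity), show σ / 4 * ((2:ℕ):ℝ) = σ / 2 by push_cast; ring,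
              mul_rpow (by norm_num) (by positivity), div_rpow hk0.le hm0.le, rpow_neg hm0.le]
            ring
          rw [e3] at a3
          have a4 : ((m + k : ℕ) : ℝ) ^ β * log (1 + k / m) ^ 2 ≤ (2 ^ |β| * (k:ℝ) ^ β) *
              (2 ^ (σ / 2) / (σ / 4) ^ 2 * ((k:ℝ) ^ (σ / 2) * (m:ℝ) ^ (-(σ / 2)))) :=
            mul_le_mul a1 a3 (by positivity) (by positivity)
          have e : (k:ℝ) ^ (-1 - s) = (k:ℝ) ^ (-(1 + 2 * σ)) * ((k:ℝ) ^ β * (k:ℝ) ^ (σ / 2)) := by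
            rw [← rpow_add hk0, ← rpow_add hk0]; congr 1; rw [hs]; ring
          rw [e]
          calc _ ≤ (C2 * (k:ℝ) ^ (-(1 + 2 * σ))) * ((2 ^ |β| * (k:ℝ) ^ β) *
              (2 ^ (σ / 2) / (σ / 4) ^ 2 * ((k:ℝ) ^ (σ / 2) * (m:ℝ) ^ (-(σ / 2))))) :=
                mul_le_mul (hb2 k (by omega)) a4 (by positivity) (by positivity)
            _ = _ := by rw [hD]; ring
      _ = D * (m:ℝ) ^ (-(σ / 2)) * ∑ k ∈ Finset.Ico (m + 1) (m + 1 + K), (k:ℝ) ^ (-1 - s) := by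
          rw [Finset.mul_sum]
      _ ≤ D * (m:ℝ) ^ (-(σ / 2)) * ((m:ℝ) ^ (-s) / s) := by
          gcongr
          exact sum_tail' hs0 hm K
      _ = D / s * ((m:ℝ) ^ (-(σ / 2)) * (m:ℝ) ^ (-s)) := by ring
      _ = _ := by rw [← rpow_add hm0]; congr 2; rw [hs]; ring

lemma energy {σ α : ℝ} (hσ : 0 < σ) (h1 : σ ≤ 1) (hα : σ < α) (hα2 : α < 3/2) (hα3 : α ≤ (3 + 2 * σ) / 4) :
    ∃ C : ℝ, 0 < C ∧ ∀ ε : ℝ, 0 < ε → ε ≤ 1 → ∀ ψ : ℕ → ℝ,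
      (∀ m k : ℕ, 1 ≤ m → 1 ≤ k → |ψ m - ψ (m + k)| ≤ ε * (m:ℝ) ^ (-ε) * log (1 + k / m)) →
      ∀ M : ℕ, ∑ m ∈ Finset.Ico 1 (M + 1), ∑ n ∈ Finset.Ico (m + 1) (M + 1),
        (- Kker σ m n * HH α m * HH α n * (ψ m - ψ n) ^ 2) ≤ C * ε := by
  obtain ⟨C1, hC1, hb1⟩ := HH_bound (a := α) (by linarith) hα2
  obtain ⟨C2, hC2, hb2⟩ := innersum_bd (β := 2 * α - 2) hσ h1 (by linarith)
  set β := 2 * α - 2 with hβ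
  refine ⟨C1 ^ 2 * C2 * 2, by positivity, ?_⟩
  intro ε hε hε1 ψ hψ M
  have hin : ∀ m ∈ Finset.Ico 1 (M + 1), ∑ n ∈ Finset.Ico (m + 1) (M + 1),
        (- Kker σ m n * HH α m * HH α n * (ψ m - ψ n) ^ 2) ≤ C1 ^ 2 * C2 * ε ^ 2 * (m:ℝ) ^ (-1 - 2 * ε) := by
    intro m hm
    rw [Finset.mem_Ico] at hm
    have hm' : (1:ℝ) ≤ m := by exact_mod_cast hm.1
    have hm0 : (0:ℝ) < m := by linarith
    have e : Finset.Ico (m + 1) (M + 1) = Finset.Ico (1 + m) ((M + 1 - m) + m) := by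
      congr 1 <;> omega
    rw [e, ← Finset.sum_Ico_add]
    calc _ ≤ ∑ k ∈ Finset.Ico 1 (M + 1 - m), (C1 ^ 2 * (m:ℝ) ^ β * (ε * (m:ℝ) ^ (-ε)) ^ 2) *
          ((- kap σ k) * (((m + k : ℕ) : ℝ) ^ β * log (1 + k / m) ^ 2)) := by
          apply Finset.sum_le_sum
          intro k hk
          rw [Finset.mem_Ico] at hk
          have hkap := kap_nonpos hσ h1 hk.1
          have hK := Kker_lower hσ h1 m hk.1
          have hK0 := Kker_nonpos hσ h1 (m := m) (n := m + k) (by omega)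
          have a1 := hb1 m hm.1
          have a2 := hb1 (m + k) (by omega)
          have a3 := HH_nonneg (a := α) (by linarith) hα2 m
          have a4 := HH_nonneg (a := α) (by linarith) hα2 (m + k)
          have a5 : (ψ m - ψ (m + k)) ^ 2 ≤ (ε * (m:ℝ) ^ (-ε) * log (1 + k / m)) ^ 2 := by
            rw [← sq_abs (ψ m - ψ (m + k))]
            exact pow_le_pow_left₀ (abs_nonneg _) (hψ m k hm.1 hk.1) 2
          have b1 : - Kker σ m (m + k) * HH α m ≤ (- kap σ k) * (C1 * (m:ℝ) ^ β) :=
            mul_le_mul hK a1 a3 (by linarith)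
          have c1 : 0 ≤ (- kap σ k) * (C1 * (m:ℝ) ^ β) := mul_nonneg (by linarith) (by positivity)
          have b2 := mul_le_mul b1 a2 a4 c1
          have b3 := mul_le_mul b2 a5 (sq_nonneg _) (mul_nonneg c1 (by positivity))
          refine b3.trans_eq ?_
          ring
      _ = (C1 ^ 2 * (m:ℝ) ^ β * (ε * (m:ℝ) ^ (-ε)) ^ 2) * ∑ k ∈ Finset.Ico 1 (M + 1 - m),
          ((- kap σ k) * (((m + k : ℕ) : ℝ) ^ β * log (1 + k / m) ^ 2)) := by rw [Finset.mul_sum]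
      _ ≤ (C1 ^ 2 * (m:ℝ) ^ β * (ε * (m:ℝ) ^ (-ε)) ^ 2) * (C2 * (m:ℝ) ^ (β - 2 * σ)) := by
          gcongr
          exact hb2 m hm.1 _
      _ = C1 ^ 2 * C2 * ε ^ 2 * ((m:ℝ) ^ β * ((m:ℝ) ^ (-ε) * (m:ℝ) ^ (-ε)) * (m:ℝ) ^ (β - 2 * σ)) := by ring
      _ = C1 ^ 2 * C2 * ε ^ 2 * (m:ℝ) ^ (β + (-ε + -ε) + (β - 2 * σ)) := by
          rw [rpow_add hm0, rpow_add hm0, rpow_add hm0]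
      _ ≤ _ := by
          gcongr
          · linarith
  refine (Finset.sum_le_sum hin).trans ?_
  rw [← Finset.mul_sum]
  have hS : ∑ m ∈ Finset.Ico 1 (M + 1), (m:ℝ) ^ (-1 - 2 * ε) ≤ 1 + 1 / (2 * ε) := by
    rcases Nat.eq_zero_or_pos M with rfl | hM
    · simp; positivity
    · have h2 := sum_tail' (s := 2 * ε) (by positivity) (le_refl 1) (M - 1)
      rw [Finset.sum_eq_sum_Ico_succ_bot (by omega)]
      rw [show 1 + 1 + (M - 1) = M + 1 by omega] at h2
      simp only [Nat.cast_one, one_rpow] at h2 ⊢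
      linarith
  calc C1 ^ 2 * C2 * ε ^ 2 * ∑ m ∈ Finset.Ico 1 (M + 1), (m:ℝ) ^ (-1 - 2 * ε)
      ≤ C1 ^ 2 * C2 * ε ^ 2 * (1 + 1 / (2 * ε)) := by gcongr
    _ = C1 ^ 2 * C2 * (ε ^ 2 + ε / 2) := by field_simp
    _ ≤ C1 ^ 2 * C2 * (2 * ε) := by
        gcongr
        nlinarith
    _ = _ := by ring

lemma phi_diff {ε : ℝ} (hε : 0 < ε) {m k : ℕ} (hm : 1 ≤ m) :
    0 ≤ (m:ℝ) ^ (-ε) - ((m + k : ℕ) : ℝ) ^ (-ε) ∧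
    (m:ℝ) ^ (-ε) - ((m + k : ℕ) : ℝ) ^ (-ε) ≤ ε * (m:ℝ) ^ (-ε) * log (1 + k / m) := by
  have hm0 : (0:ℝ) < m := by exact_mod_cast hm
  constructor
  · have := rpow_le_rpow_of_nonpos hm0 (show (m:ℝ) ≤ ((m + k : ℕ) : ℝ) by push_cast; linarith [(Nat.cast_nonneg k : (0:ℝ) ≤ k)]) (show -ε ≤ 0 by linarith)
    linarith
  · have e : ((m + k : ℕ) : ℝ) = m * (1 + k / m) := by push_cast; field_simp
    rw [e, mul_rpow hm0.le (by positivity), rpow_def_of_pos (show 0 < 1 + (k:ℝ) / m by positivity)]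
    have := add_one_le_exp (log (1 + (k:ℝ) / m) * -ε)
    have hp : 0 < (m:ℝ) ^ (-ε) := by positivity
    nlinarith

lemma crit {σ α : ℝ} (hσ : 0 < σ) (h1 : σ ≤ 1) (hα : σ < α) (hα2 : α < 3/2) (hα3 : α ≤ (3 + 2 * σ) / 4)
    (Wt : ℕ → ℝ) (hW : ∀ n, 0 ≤ Wt n) (hex : ∃ n, 1 ≤ n ∧ Wt n ≠ 0) :
    ∃ f : ℕ → ℝ, f 0 = 0 ∧ (Function.support f).Finite ∧
          Qform σ f < ∑' n : ℕ, (Wweight σ α n + Wt n) * (f n) ^ 2 := by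
  obtain ⟨n0, hn0, hne⟩ := hex
  have hWp : 0 < Wt n0 := lt_of_le_of_ne (hW n0) (Ne.symm hne)
  obtain ⟨C, hC, hE⟩ := energy hσ h1 hα hα2 hα3
  have hH := HH_pos (a := α) (by linarith) hα2 hn0
  have hn' : (1:ℝ) ≤ n0 := by exact_mod_cast hn0
  set w := Wt n0 * HH α n0 ^ 2 / 16 with hw
  have hw0 : 0 < w := by positivity
  set ε := min (1 / (2 * (n0:ℝ))) (w / (2 * C)) with hεd
  have hε : 0 < ε := lt_min (by positivity) (by positivity)
  have hεa : ε ≤ 1 / (2 * (n0:ℝ)) := min_le_left _ _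
  have hεb : ε ≤ w / (2 * C) := min_le_right _ _
  have hε1 : ε ≤ 1 := hεa.trans (by rw [div_le_one (by positivity)]; linarith)
  set ψ : ℕ → ℝ := fun n => max ((n:ℝ) ^ (-ε) - 1/4) 0 with hψ
  have hψd : ∀ m k : ℕ, 1 ≤ m → 1 ≤ k → |ψ m - ψ (m + k)| ≤ ε * (m:ℝ) ^ (-ε) * log (1 + k / m) := by
    intro m k hm hk
    obtain ⟨p1, p2⟩ := phi_diff hε (k := k) hm
    refine le_trans ?_ p2
    simp only [hψ]
    refine (abs_max_sub_max_le_abs _ _ _).trans ?_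
    rw [sub_sub_sub_cancel_right, abs_of_nonneg p1]
  obtain ⟨N, hN⟩ : ∃ N : ℕ, ∀ n, N < n → ψ n = 0 := by
    have t := (tendsto_rpow_neg_atTop hε).comp tendsto_natCast_atTop_atTop
    have t2 := t.eventually (gt_mem_nhds (show (0:ℝ) < 1/4 by norm_num))
    obtain ⟨N, hN⟩ := eventually_atTop.mp t2
    refine ⟨N, fun n hn => ?_⟩
    have := hN n hn.le
    simp only [Function.comp] at this
    simp only [hψ]
    exact max_eq_right (by linarith)
  have hup := upper hσ h1 hα hα2 ψ N hN (C * ε) (hE ε hε hε1 ψ hψd)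
  set f : ℕ → ℝ := fun n => HH α n * ψ n with hf
  have hS : ∀ n, n ∉ Finset.range (N + n0 + 1) → f n = 0 := by
    intro n hn
    simp only [Finset.mem_range, not_lt] at hn
    simp only [hf, hN n (by omega), mul_zero]
  refine ⟨f, by simp [hf, HH], ?_, ?_⟩
  · refine (Finset.finite_toSet (Finset.range (N + n0 + 1))).subset ?_
    intro n hn
    by_contra h
    exact hn (hS n h)
  · have e1 := wsum_eq (fun n => Wweight σ α n + Wt n) f _ hS
    have e2 := wsum_eq (fun n => Wweight σ α n) f _ hS
    have hup' : Qform σ f - ∑' n, Wweight σ α n * f n ^ 2 ≤ C * ε := hup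
    rw [e2] at hup'
    rw [e1]
    simp only [add_mul, Finset.sum_add_distrib]
    have h3 : Wt n0 * f n0 ^ 2 ≤ ∑ n ∈ Finset.range (N + n0 + 1), Wt n * f n ^ 2 := by
      apply Finset.single_le_sum (f := fun n => Wt n * f n ^ 2)
      · intro n _
        exact mul_nonneg (hW n) (sq_nonneg _)
      · simp
    have h4 : 1/4 ≤ ψ n0 := by
      refine le_trans ?_ (le_max_left _ _)
      rw [rpow_def_of_pos (by linarith)]
      have a := add_one_le_exp (log (n0:ℝ) * -ε)
      have b : log (n0:ℝ) ≤ n0 := by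
        have := log_le_sub_one_of_pos (show (0:ℝ) < n0 by linarith)
        linarith
      have c : ε * n0 ≤ 1/2 := by
        rw [le_div_iff₀ (by positivity)] at hεa
        linarith
      have d : ε * log (n0:ℝ) ≤ ε * n0 := mul_le_mul_of_nonneg_left b hε.le
      linarith
    have h5 : w ≤ Wt n0 * f n0 ^ 2 := by
      have : (1/4:ℝ) ^ 2 ≤ ψ n0 ^ 2 := pow_le_pow_left₀ (by norm_num) h4 2
      calc w = Wt n0 * (HH α n0 ^ 2 * (1/4) ^ 2) := by rw [hw]; ring
        _ ≤ Wt n0 * (HH α n0 ^ 2 * ψ n0 ^ 2) := by gcongr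
        _ = _ := by simp only [hf]; ring
    have h6 : C * ε ≤ w / 2 := by
      rw [le_div_iff₀ (by positivity)] at hεb
      linarith
    linarith



end Aux

/-- Criticality of the Hardy-weight `W_{α,σ}` for `(-Δ_ℕ)^σ` holds iff `α ≤ (3+2σ)/4`. -/
theorem stmt_0 (σ α : ℝ) (hσ0 : 0 < σ) (hσ1 : σ ≤ 1)
    (hα1 : σ < α) (hα2 : α < min (3/2) (1 + σ)) :
    ((∀ f : ℕ → ℝ, f 0 = 0 → (Function.support f).Finite →
        (∑' n : ℕ, Wweight σ α n * (f n) ^ 2) ≤ Qform σ f) ∧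
      (∀ Wt : ℕ → ℝ, (∀ n, 0 ≤ Wt n) → (∃ n, 1 ≤ n ∧ Wt n ≠ 0) →
        ∃ f : ℕ → ℝ, f 0 = 0 ∧ (Function.support f).Finite ∧
          Qform σ f < ∑' n : ℕ, (Wweight σ α n + Wt n) * (f n) ^ 2))
    ↔ α ≤ (3 + 2 * σ) / 4 := by
  have h2 : α < 3/2 := (lt_min_iff.mp hα2).1
  constructor
  · rintro ⟨_, h⟩
    exact not_crit hσ0 hσ1 hα1 h2 h
  · intro h
    exact ⟨fun f f0 hf => hardy hσ0 hσ1 hα1 h2 f f0 hf, fun Wt hW hex => crit hσ0 hσ1 hα1 h2 h Wt hW hex⟩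
end

section
/- Let σ ∈ (0,1] and σ < α < min{3/2, 1+σ}. Then the series Σ_{n≥1} I_α(n)²·W_{α,σ}(n) converges if and only if α < (3+2σ)/4. In particular, for α = (3+2σ)/4 one has Σ_{n≥1} I_α(n)²·W_{α,σ}(n) = ∞ (null-criticality of the optimal Hardy-weight). -/
open Real Filter

lemma gamma_prod (s : ℝ) (hs : 0 < s) (n : ℕ) :
    Real.Gamma (n + s + 1) = Real.Gamma s * ∏ j ∈ Finset.range (n + 1), (s + j) := by
  induction n with
  | zero => simp [Real.Gamma_add_one hs.ne', mul_comm]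
  | succ k ih =>
    rw [Finset.prod_range_succ, ← mul_assoc, ← ih, mul_comm,
      Real.Gamma_add_one (by positivity)]
    push_cast
    rw [show (k : ℝ) + 1 + s = k + s + 1 by ring, show s + ((k : ℝ) + 1) = k + s + 1 by ring]

lemma gamma_equiv (s : ℝ) (hs : 0 < s) :
    Asymptotics.IsEquivalent atTop (fun n : ℕ => Real.Gamma (n + s + 1))
      (fun n : ℕ => (n : ℝ) ^ s * (n.factorial : ℝ)) := by
  have hG := Real.Gamma_pos_of_pos hs
  have h := Real.GammaSeq_tendsto_Gamma s
  have h2 : Tendsto (fun n : ℕ => Real.Gamma s / Real.GammaSeq s n) atTop (nhds 1) := by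
    have := (tendsto_const_nhds (x := Real.Gamma s)).div h hG.ne'
    rwa [div_self hG.ne'] at this
  refine Asymptotics.isEquivalent_of_tendsto_one (h2.congr fun n => ?_)
  have hp : 0 < ∏ j ∈ Finset.range (n + 1), (s + j) :=
    Finset.prod_pos fun j _ => by positivity
  simp only [Pi.div_apply]
  rw [gamma_prod s hs, Real.GammaSeq, div_div_eq_mul_div]

lemma summ_iff (C p : ℝ) (hC : C ≠ 0) (u : ℕ → ℝ)
    (h : Asymptotics.IsEquivalent atTop u (fun n : ℕ => C * (n : ℝ) ^ p)) :
    Summable u ↔ p < -1 := by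
  rw [← Real.summable_nat_rpow, ← summable_mul_left_iff (f := fun n : ℕ => (n : ℝ) ^ p) hC]
  exact ⟨fun hu => summable_of_isBigO_nat hu h.symm.isBigO,
    fun hu => summable_of_isBigO_nat hu h.isBigO⟩

lemma main_iff (σ α : ℝ) (hσ0 : 0 < σ) (hα1 : σ < α) (hα2 : α < 3/2) :
    Summable (fun n : ℕ => (Riesz α n) ^ 2 * Wweight σ α n) ↔ α < (3 + 2 * σ) / 4 := by
  rw [← summable_nat_add_iff 2]
  set C : ℝ := (4 / (4 ^ α * Real.sqrt 2) * Real.Gamma (3/2 - α) / Real.Gamma α) ^ 2 *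
    (4 ^ σ * (Real.Gamma (3/2 - α + σ) * Real.Gamma α /
            (Real.Gamma (α - σ) * Real.Gamma (3/2 - α)))) with hCdef
  have g1 : 0 < Real.Gamma (3/2 - α) := Real.Gamma_pos_of_pos (by linarith)
  have g2 : 0 < Real.Gamma (3/2 - α + σ) := Real.Gamma_pos_of_pos (by linarith)
  have g3 : 0 < Real.Gamma α := Real.Gamma_pos_of_pos (by linarith)
  have g4 : 0 < Real.Gamma (α - σ) := Real.Gamma_pos_of_pos (by linarith)
  have hC : 0 < C := by positivity
  have e2 : Asymptotics.IsEquivalent atTop (fun n : ℕ => (n : ℝ) + 2) (fun n : ℕ => (n : ℝ)) := by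
    refine Asymptotics.IsEquivalent.refl.add_isLittleO ?_
    exact Asymptotics.isLittleO_const_left.2 (Or.inr
      (tendsto_norm_atTop_atTop.comp tendsto_natCast_atTop_atTop))
  have E := ((Asymptotics.IsEquivalent.refl (u := fun _ : ℕ => C)).mul (e2.pow 2)).mul
    (((gamma_equiv α (by linarith)).mul (gamma_equiv (α - σ) (by linarith))).div
      ((gamma_equiv (3 - α) (by linarith)).mul (gamma_equiv (3 - α + σ) (by linarith))))
  rw [show α < (3 + 2 * σ) / 4 ↔ 4 * α - 2 * σ - 4 < -1 by
    constructor <;> intro h <;> linarith]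
  refine summ_iff C _ hC.ne' _ ?_
  refine (E.congr_left ?_).congr_right ?_
  · refine Eventually.of_forall fun n => ?_
    have p1 : 0 < Real.Gamma (n + α + 1) := Real.Gamma_pos_of_pos (by linarith [(n.cast_nonneg : (0:ℝ) ≤ n)])
    have p2 : 0 < Real.Gamma (n + (3 - α) + 1) := Real.Gamma_pos_of_pos (by linarith [(n.cast_nonneg : (0:ℝ) ≤ n)])
    simp only [Riesz, Wweight, Pi.mul_apply, Pi.div_apply, Pi.pow_apply]
    push_cast
    rw [show (n : ℝ) + 2 + α - 1 = n + α + 1 by ring,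
      show (n : ℝ) + 2 - α + 2 = n + (3 - α) + 1 by ring,
      show (n : ℝ) + 2 + α - σ - 1 = n + (α - σ) + 1 by ring,
      show (n : ℝ) + 2 - α + σ + 2 = n + (3 - α + σ) + 1 by ring, hCdef]
    generalize Real.Gamma (n + α + 1) = A at *
    generalize Real.Gamma (n + (3 - α) + 1) = B at *
    field_simp
  · filter_upwards [eventually_gt_atTop 0] with n hn
    have hn' : (0 : ℝ) < n := by exact_mod_cast hn
    have hf : (0 : ℝ) < n.factorial := by positivity
    simp only [Pi.mul_apply, Pi.div_apply, Pi.pow_apply]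
    have : (n : ℝ) ^ (4 * α - 2 * σ - 4) =
        (n : ℝ) ^ 2 * ((n : ℝ) ^ α * (n : ℝ) ^ (α - σ) /
          ((n : ℝ) ^ (3 - α) * (n : ℝ) ^ (3 - α + σ))) := by
      rw [← Real.rpow_natCast, ← Real.rpow_add hn', ← Real.rpow_add hn', ← Real.rpow_sub hn',
        ← Real.rpow_add hn']
      congr 1
      push_cast
      ring
    rw [this]
    field_simp

/-- Null-criticality: `Σ I_α(n)² W_{α,σ}(n)` converges iff `α < (3+2σ)/4`. -/
theorem stmt_1 (σ α : ℝ) (hσ0 : 0 < σ) (hσ1 : σ ≤ 1)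
    (hα1 : σ < α) (hα2 : α < min (3/2) (1 + σ)) :
    (Summable (fun n : ℕ => (Riesz α n) ^ 2 * Wweight σ α n) ↔ α < (3 + 2 * σ) / 4) ∧
    (α = (3 + 2 * σ) / 4 → ¬ Summable (fun n : ℕ => (Riesz α n) ^ 2 * Wweight σ α n)) := by
  have h := main_iff σ α hσ0 hα1 (lt_of_lt_of_le hα2 (min_le_left _ _))
  exact ⟨h, fun he hs => absurd (h.1 hs) (by rw [← he]; exact lt_irrefl _)⟩
end
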